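/- Let N ≥ 2, let Ω be a bounded, connected open set in ℂ^N, let x₀ be a point of Ω, and let ε > 0. Then there exists a polynomially convex simple closed curve J in ℂ^N such that x₀ ∈ J ⊆ Ω, m(Ω \ J) < ε, P(J) = C(J), and the set of polynomials in z₁,…,z_N that are zero-free on J is dense in P(cl Ω); i.e., for every polynomial p and every δ > 0 there is a polynomial q with no zero on J such that sup_{z ∈ cl Ω} |p(z) − q(z)| < δ. -/

import Mathlib

open Set MvPolynomial Topology MeasureTheory

noncomputable section

/-- The polynomial hull of a set `X ⊆ ℂ^N`: points where every polynomial in the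
coordinates is dominated by its supremum over `X`. -/
def polyHull {N : ℕ} (X : Set (Fin N → ℂ)) : Set (Fin N → ℂ) :=
  {z | ∀ p : MvPolynomial (Fin N) ℂ, ‖eval z p‖ ≤ ⨆ x ∈ X, ‖eval x p‖}

/-- A set is polynomially convex if it equals its polynomial hull. -/
def IsPolynomiallyConvex {N : ℕ} (X : Set (Fin N → ℂ)) : Prop :=
  polyHull X = X

/-- `J` is an arc from `a` to `b`: the image of an injective continuous map on `[0,1]`
(equivalently, in a Hausdorff space, a subset homeomorphic to `[0,1]`). -/
def IsArcFrom {α : Type*} [TopologicalSpace α] (J : Set α) (a b : α) : Prop :=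
  ∃ γ : ℝ → α, ContinuousOn γ (Icc 0 1) ∧ InjOn γ (Icc 0 1) ∧
    γ '' Icc 0 1 = J ∧ γ 0 = a ∧ γ 1 = b

/-- `J` is an arc: a subset homeomorphic to the closed unit interval. -/
def IsArc {α : Type*} [TopologicalSpace α] (J : Set α) : Prop :=
  ∃ a b, IsArcFrom J a b

/-- `J` is a simple closed curve: a subset homeomorphic to the unit circle. -/
def IsSimpleClosedCurve {α : Type*} [TopologicalSpace α] (J : Set α) : Prop :=
  ∃ γ : Circle → α, Continuous γ ∧ Function.Injective γ ∧ Set.range γ = J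

/-- A `C^∞`-smooth open arc: the image of an injective `C^∞` map on an open interval,
with nowhere vanishing derivative, that is a homeomorphism onto its image. -/
def IsSmoothOpenArc {E : Type*} [NormedAddCommGroup E] [NormedSpace ℝ E]
    (A : Set E) : Prop :=
  ∃ (a b : ℝ) (γ : ℝ → E), a < b ∧ ContDiffOn ℝ (⊤ : ℕ∞) γ (Ioo a b) ∧
    (∀ t ∈ Ioo a b, derivWithin γ (Ioo a b) t ≠ 0) ∧
    InjOn γ (Ioo a b) ∧
    IsEmbedding ((Ioo a b).restrict γ) ∧
    γ '' Ioo a b = A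

/-- `P(X) = C(X)`: every continuous function on `X` is a uniform limit of polynomials. -/
def PolyEqContinuous {N : ℕ} (X : Set (Fin N → ℂ)) : Prop :=
  ∀ f : (Fin N → ℂ) → ℂ, ContinuousOn f X → ∀ δ : ℝ, 0 < δ →
    ∃ p : MvPolynomial (Fin N) ℂ, ∀ x ∈ X, ‖f x - eval x p‖ < δ

/-- `L` is a complex affine line in `ℂ^N`. -/
def IsComplexAffineLine {N : ℕ} (L : Set (Fin N → ℂ)) : Prop :=
  ∃ (z₀ v : Fin N → ℂ), v ≠ 0 ∧ L = {z | ∃ t : ℂ, z = z₀ + t • v}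



/-- There is a path from `a` to `b` inside `V` covering `κ`. -/
def Cov {E : Type*} [TopologicalSpace E] (V κ : Set E) (a b : E) : Prop :=
  ∃ γ : Path a b, (∀ t, γ t ∈ V) ∧ κ ⊆ range γ

theorem Cov.of_joined {E : Type*} [TopologicalSpace E] {V : Set E} {a b : E}
    (h : JoinedIn V a b) : Cov V ∅ a b := by
  obtain ⟨γ, hγ⟩ := h
  exact ⟨γ, hγ, empty_subset _⟩

theorem Cov.trans {E : Type*} [TopologicalSpace E] {V κ κ' : Set E} {a b c : E}
    (h : Cov V κ a b) (h' : Cov V κ' b c) : Cov V (κ ∪ κ') a c := by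
  obtain ⟨γ, hγ, hk⟩ := h
  obtain ⟨γ', hγ', hk'⟩ := h'
  have hr := Path.trans_range γ γ'
  refine ⟨γ.trans γ', fun t => ?_, ?_⟩
  · have : (γ.trans γ') t ∈ range γ ∪ range γ' := hr ▸ mem_range_self t
    rcases this with ⟨s, hs⟩ | ⟨s, hs⟩
    · rw [← hs]; exact hγ s
    · rw [← hs]; exact hγ' s
  · rw [hr]; exact union_subset_union hk hk'

theorem Cov.mono {E : Type*} [TopologicalSpace E] {V V' κ κ' : Set E} {a b : E}
    (h : Cov V κ a b) (hV : V ⊆ V') (hk : κ' ⊆ κ) : Cov V' κ' a b := by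
  obtain ⟨γ, hγ, hk'⟩ := h
  exact ⟨γ, fun t => hV (hγ t), hk.trans hk'⟩

theorem cov_ball {E : Type*} [NormedAddCommGroup E] [NormedSpace ℝ E] [FiniteDimensional ℝ E]
    {V : Set E} {x : E} {r : ℝ} (hr : 0 < r) (hV : Metric.closedBall x r ⊆ V) {a b : E}
    (ha : a ∈ Metric.closedBall x r) (hb : b ∈ Metric.closedBall x r) :
    Cov V (Metric.closedBall x r) a b := by
  have : ProperSpace E := FiniteDimensional.proper ℝ E
  have : CompactSpace (Metric.closedBall x r) :=
    isCompact_iff_compactSpace.mp (isCompact_closedBall x r)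
  have : Nonempty (Metric.closedBall x r) := ⟨⟨a, ha⟩⟩
  obtain ⟨g, hg, hgs⟩ := exists_nat_bool_continuous_surjective_of_compact (Metric.closedBall x r)
  have : TietzeExtension.{0} (Metric.closedBall x r) := Metric.instTietzeExtensionClosedBall ℝ x hr
  let f : C(cantorSet, Metric.closedBall x r) :=
    ⟨g ∘ cantorSetHomeomorphNatToBool, hg.comp cantorSetHomeomorphNatToBool.continuous⟩
  obtain ⟨h, hh⟩ := f.exists_restrict_eq isClosed_cantorSet
  have hc : Cov V (Metric.closedBall x r) ((h 0 : Metric.closedBall x r) : E)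
      ((h 1 : Metric.closedBall x r) : E) := by
    refine ⟨⟨⟨fun t => (h (t : ℝ) : E), by fun_prop⟩, by simp, by simp⟩, fun t => ?_, ?_⟩
    · exact hV (h (t : ℝ)).2
    · intro y hy
      obtain ⟨s, hs⟩ := hgs ⟨y, hy⟩
      let c := cantorSetHomeomorphNatToBool.symm s
      refine ⟨⟨c, cantorSet_subset_unitInterval c.2⟩, ?_⟩
      have h1 : h (c : ℝ) = f c := by rw [← hh]; rfl
      have h2 : f c = ⟨y, hy⟩ := by
        rw [← hs]; simp [f, c]
      change ((h (c : ℝ) : Metric.closedBall x r) : E) = y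
      rw [h1, h2]
  have conv := convex_closedBall x r
  have j1 : JoinedIn V a ((h 0 : Metric.closedBall x r) : E) :=
    JoinedIn.of_segment_subset ((conv.segment_subset ha (h 0).2).trans hV)
  have j2 : JoinedIn V ((h 1 : Metric.closedBall x r) : E) b :=
    JoinedIn.of_segment_subset ((conv.segment_subset (h 1).2 hb).trans hV)
  refine (((Cov.of_joined j1).trans hc).trans (Cov.of_joined j2)).mono subset_rfl ?_
  intro y hy
  exact Or.inl (Or.inr hy)

theorem cov_compact {E : Type*} [NormedAddCommGroup E] [NormedSpace ℝ E] [FiniteDimensional ℝ E]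
    {V D D' κ : Set E} (hD : IsOpen D) (hDV : D ⊆ V) (hDD : D ⊆ D')
    (hj : ∀ x ∈ D', ∀ y ∈ D', JoinedIn V x y) (hκ : IsCompact κ) (hκD : κ ⊆ D) {a b : E}
    (ha : a ∈ D') (hb : b ∈ D') : Cov V κ a b := by
  have h1 : ∀ x ∈ D, ∃ r > 0, Metric.closedBall x r ⊆ D := fun x hx =>
    Metric.nhds_basis_closedBall.mem_iff.mp (hD.mem_nhds hx)
  suffices h : Cov V κ a a by
    exact (h.trans (Cov.of_joined (hj a ha b hb))).mono subset_rfl (by simp)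
  refine hκ.induction_on (p := fun s => Cov V s a a) ?_ ?_ ?_ ?_
  · exact Cov.of_joined (hj a ha a ha)
  · intro s t hst h; exact h.mono subset_rfl hst
  · intro s t hs ht; exact hs.trans ht
  · intro x hx
    obtain ⟨r, hr, hrD⟩ := h1 x (hκD hx)
    have hxx : x ∈ Metric.closedBall x r := Metric.mem_closedBall_self hr.le
    refine ⟨Metric.closedBall x r, mem_nhdsWithin_of_mem_nhds (Metric.closedBall_mem_nhds x hr), ?_⟩
    have hx' := hDD (hκD hx)
    refine (((Cov.of_joined (hj a ha x hx')).trans (cov_ball hr (hrD.trans hDV) hxx hxx)).trans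
      (Cov.of_joined (hj x hx' a ha))).mono subset_rfl ?_
    intro y hy
    exact Or.inl (Or.inr hy)

theorem cov_glue {E : Type*} [TopologicalSpace E] (V κ : ℕ → Set E) (d : ℕ → E) (M : ℕ)
    (h : ∀ j < M, Cov (V j) (κ j) (d j) (d (j + 1))) :
    ∃ f : ℝ → E, Continuous f ∧ f 0 = d 0 ∧ f M = d M ∧
      ∀ j < M, (∀ t ∈ Icc (j : ℝ) (j + 1), f t ∈ V j) ∧ κ j ⊆ f '' Icc (j : ℝ) (j + 1) := by
  induction M with
  | zero => exact ⟨fun _ => d 0, continuous_const, rfl, by simp, by simp⟩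
  | succ M ih =>
    obtain ⟨f, hf, hf0, hfM, hfj⟩ := ih (fun j hj => h j (by omega))
    obtain ⟨γ, hγ, hκ⟩ := h M (by omega)
    let g : ℝ → E := fun t => if t ≤ M then f t else γ.extend (t - M)
    have hg1 : ∀ t : ℝ, t ≤ M → g t = f t := fun t ht => if_pos ht
    have hg2 : ∀ t : ℝ, (M : ℝ) ≤ t → g t = γ.extend (t - M) := by
      intro t ht
      rcases ht.lt_or_eq with ht | ht
      · exact if_neg (not_le.mpr ht)
      · rw [hg1 t ht.ge, ← ht, hfM]; simp
    refine ⟨g, ?_, ?_, ?_, ?_⟩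
    · refine Continuous.if_le hf (γ.continuous_extend.comp (by fun_prop)) continuous_id
        continuous_const ?_
      intro t ht
      rw [show t = (M : ℝ) from ht, hfM]; simp
    · rw [hg1 0 (by positivity), hf0]
    · rw [hg2 _ (by push_cast; linarith)]; simp
    · intro j hj
      rcases Nat.lt_succ_iff_lt_or_eq.mp hj with hj | rfl
      · have hle : (j : ℝ) + 1 ≤ M := by exact_mod_cast hj
        obtain ⟨h1, h2⟩ := hfj j hj
        constructor
        · intro t ht; rw [hg1 t (ht.2.trans hle)]; exact h1 t ht
        · rintro y hy
          obtain ⟨t, ht, rfl⟩ := h2 hy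
          exact ⟨t, ht, hg1 t (ht.2.trans hle)⟩
      · constructor
        · intro t ht
          have : t - j ∈ Icc (0 : ℝ) 1 := ⟨by linarith [ht.1], by linarith [ht.2]⟩
          rw [hg2 t ht.1, γ.extend_apply this]
          exact hγ _
        · rintro y hy
          obtain ⟨t, rfl⟩ := hκ hy
          refine ⟨(j : ℝ) + t, ⟨by linarith [t.2.1], by linarith [t.2.2]⟩, ?_⟩
          rw [hg2 _ (by linarith [t.2.1])]
          simp

theorem loop_of_cov {E : Type*} [TopologicalSpace E] (V κ : ℕ → Set E) (d : ℕ → E) (M : ℕ)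
    (hM : 0 < M) (hd : d M = d 0) (h : ∀ j < M, Cov (V j) (κ j) (d j) (d (j + 1))) :
    ∃ γ : C(unitInterval, E), γ 0 = γ 1 ∧ (∀ j < M, κ j ⊆ range γ) ∧
      ∀ j < M, ∀ t : unitInterval, (j : ℝ) / M ≤ t → (t : ℝ) ≤ ((j : ℝ) + 1) / M → γ t ∈ V j := by
  obtain ⟨f, hf, hf0, hfM, hfj⟩ := cov_glue V κ d M h
  have hM' : (0 : ℝ) < M := by exact_mod_cast hM
  refine ⟨⟨fun t => f (M * t), by fun_prop⟩, ?_, ?_, ?_⟩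
  · simp [hf0, hfM, hd]
  · intro j hj y hy
    obtain ⟨t, ht, rfl⟩ := (hfj j hj).2 hy
    have hle : (j : ℝ) + 1 ≤ M := by exact_mod_cast hj
    have hj0 : (0 : ℝ) ≤ j := by positivity
    refine ⟨⟨t / M, div_nonneg (hj0.trans ht.1) hM'.le, ?_⟩, ?_⟩
    · rw [div_le_one hM']; linarith [ht.2]
    · simp only [ContinuousMap.coe_mk]
      congr 1; field_simp
  · intro j hj t h1 h2
    refine (hfj j hj).1 _ ⟨?_, ?_⟩
    · rw [div_le_iff₀ hM'] at h1; linarith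
    · rw [le_div_iff₀ hM'] at h2; linarith

/-- partition points -/
def ptI (M j : ℕ) : unitInterval := projIcc 0 1 zero_le_one ((j : ℝ) / M)

theorem ptI_zero (M : ℕ) : ptI M 0 = 0 := by
  simp [ptI, projIcc_left]

theorem ptI_self (M : ℕ) (hM : 0 < M) : ptI M M = 1 := by
  have : (M : ℝ) ≠ 0 := by positivity
  simp [ptI, projIcc_right, div_self this]

theorem ptI_val (M j : ℕ) (hM : 0 < M) (hj : j ≤ M) : ((ptI M j : unitInterval) : ℝ) = j / M := by
  have hM' : (0 : ℝ) < M := by exact_mod_cast hM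
  have hle : (j : ℝ) ≤ M := by exact_mod_cast hj
  have : (j : ℝ) / M ∈ Icc (0 : ℝ) 1 := ⟨by positivity, by rw [div_le_one hM']; exact hle⟩
  simp [ptI, projIcc_of_mem _ this]

theorem exists_partition {E : Type*} [PseudoMetricSpace E] (γ : C(unitInterval, E)) {s : ℝ}
    (hs : 0 < s) : ∃ M₀ : ℕ, ∀ M ≥ M₀, 0 < M → ∀ x y : unitInterval,
      |(x : ℝ) - y| ≤ 1 / M → dist (γ x) (γ y) < s := by
  have hu : UniformContinuous γ := CompactSpace.uniformContinuous_of_continuous γ.continuous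
  obtain ⟨η, hη, h⟩ := Metric.uniformContinuous_iff.mp hu s hs
  obtain ⟨M₀, hM₀⟩ := exists_nat_gt (1 / η)
  refine ⟨M₀, fun M hM hM0 x y hxy => h ?_⟩
  have hM' : (0 : ℝ) < M := by exact_mod_cast hM0
  have : (M₀ : ℝ) ≤ M := by exact_mod_cast hM
  have h2 : 1 / (M : ℝ) < η := by
    rw [div_lt_iff₀ hM']
    have := hM₀.trans_le this
    rw [div_lt_iff₀ hη] at this
    linarith
  calc dist x y = |(x : ℝ) - y| := rfl
    _ < η := hxy.trans_lt h2

theorem exists_index (M : ℕ) (hM : 0 < M) (t : unitInterval) :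
    ∃ j < M, (j : ℝ) / M ≤ t ∧ (t : ℝ) ≤ ((j : ℝ) + 1) / M := by
  have hM' : (0 : ℝ) < M := by exact_mod_cast hM
  have ht0 := t.2.1
  have ht1 := t.2.2
  by_cases h : (t : ℝ) = 1
  · refine ⟨M - 1, by omega, ?_, ?_⟩
    · rw [h, div_le_one hM']; exact_mod_cast Nat.sub_le M 1
    · rw [h, le_div_iff₀ hM']; push_cast [Nat.cast_sub hM]; linarith
  · have hlt : (t : ℝ) < 1 := lt_of_le_of_ne ht1 h
    refine ⟨⌊(t : ℝ) * M⌋₊, ?_, ?_, ?_⟩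
    · rw [Nat.floor_lt (by positivity)]; nlinarith
    · rw [div_le_iff₀ hM']; exact Nat.floor_le (by positivity)
    · rw [le_div_iff₀ hM']; exact (Nat.lt_floor_add_one _).le

/-- measure bookkeeping: approximating finitely many open sets by compacts -/
theorem exists_compacts {E : Type*} [TopologicalSpace E] [MeasurableSpace E] [BorelSpace E]
    [T2Space E]
    (μ : Measure E) [μ.InnerRegularCompactLTTop] (O : ℕ → Set E) (hO : ∀ j, IsOpen (O j))
    (hfin : ∀ j, μ (O j) ≠ ⊤) (M : ℕ) {loss : ENNReal} (hl : loss ≠ 0) :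
    ∃ κ : ℕ → Set E, (∀ j, IsCompact (κ j)) ∧ (∀ j, κ j ⊆ O j) ∧
      μ (⋃ j ∈ Finset.range M, (O j \ κ j)) ≤ loss := by
  have hl' : loss / (M + 1 : ℕ) ≠ 0 := by
    simp [hl, ENNReal.div_eq_zero_iff]
  have h : ∀ j, ∃ κ ⊆ O j, IsCompact κ ∧ μ (O j \ κ) < loss / (M + 1 : ℕ) := fun j =>
    (hO j).measurableSet.exists_isCompact_sdiff_lt (hfin j) hl'
  choose κ h1 h2 h3 using h
  refine ⟨κ, h2, h1, ?_⟩
  calc μ (⋃ j ∈ Finset.range M, (O j \ κ j)) ≤ ∑ j ∈ Finset.range M, μ (O j \ κ j) :=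
        measure_biUnion_finset_le _ _
    _ ≤ ∑ j ∈ Finset.range M, loss / (M + 1 : ℕ) := Finset.sum_le_sum fun j _ => (h3 j).le
    _ = M * (loss / (M + 1 : ℕ)) := by simp
    _ ≤ (M + 1 : ℕ) * (loss / (M + 1 : ℕ)) := by gcongr; simp
    _ ≤ loss := ENNReal.mul_div_le

theorem template {N : ℕ} (γ : C(unitInterval, Fin N → ℂ)) (hγ : γ 0 = γ 1)
    {X D : Set (Fin N → ℂ)} (hD : IsOpen D) (hDX : D ⊆ X) {r δ : ℝ} (hr : 0 < r) (hrδ : r ≤ δ)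
    (hmeet : ∀ t, (D ∩ Metric.ball (γ t) (r / 2)).Nonempty)
    (hjoin : ∀ t, ∀ x ∈ D ∩ Metric.ball (γ t) r, ∀ y ∈ D ∩ Metric.ball (γ t) r,
      JoinedIn (X ∩ Metric.ball (γ t) δ) x y)
    {loss : ENNReal} (hl : loss ≠ 0) :
    ∃ γ' : C(unitInterval, Fin N → ℂ), γ' 0 = γ' 1 ∧ (∀ t, γ' t ∈ X) ∧
      (∀ t, dist (γ' t) (γ t) < 2 * δ) ∧
      volume (((⋃ t, Metric.ball (γ t) (r / 2)) ∩ D) \ range γ') ≤ loss := by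
  obtain ⟨M₀, hM₀⟩ := exists_partition γ (half_pos hr)
  set M := M₀ + 1
  have hM : 0 < M := by omega
  have hpart := hM₀ M (by omega) hM
  have hM' : (0 : ℝ) < M := by exact_mod_cast hM
  choose pick hpick using hmeet
  let d : ℕ → (Fin N → ℂ) := fun j => pick (ptI M j)
  -- adjust the last point
  let d' : ℕ → (Fin N → ℂ) := fun j => if j = M then pick 0 else d j
  have hd'1 : ∀ j ≤ M, d' j ∈ D ∩ Metric.ball (γ (ptI M j)) (r / 2) := by
    intro j hj
    by_cases h : j = M
    · simp only [d', h, if_true, ptI_self M hM, ← hγ]; exact hpick 0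
    · simp only [d', h, if_false]; exact hpick _
  have hclose : ∀ j < M, dist (γ (ptI M (j + 1))) (γ (ptI M j)) < r / 2 := by
    intro j hj
    apply hpart
    rw [ptI_val M _ hM (by omega), ptI_val M _ hM (by omega)]
    push_cast
    rw [add_div, add_sub_cancel_left, abs_of_pos (by positivity)]
  let O : ℕ → Set (Fin N → ℂ) := fun j => D ∩ Metric.ball (γ (ptI M j)) r
  have hO : ∀ j, IsOpen (O j) := fun j => hD.inter Metric.isOpen_ball
  obtain ⟨κ, hκ1, hκ2, hκ3⟩ := exists_compacts volume O hO
    (fun j => ((measure_mono inter_subset_right).trans_lt Metric.isBounded_ball.measure_lt_top).ne) M hl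
  have hcov : ∀ j < M, Cov (X ∩ Metric.ball (γ (ptI M j)) δ) (κ j) (d' j) (d' (j + 1)) := by
    intro j hj
    refine cov_compact (hO j) (inter_subset_inter hDX (Metric.ball_subset_ball hrδ)) subset_rfl
      (hjoin _) (hκ1 j) (hκ2 j) ?_ ?_
    · have := hd'1 j hj.le
      exact ⟨this.1, Metric.ball_subset_ball (by linarith) this.2⟩
    · have := hd'1 (j + 1) hj
      refine ⟨this.1, ?_⟩
      have h1 := this.2
      have h2 := hclose j hj
      rw [Metric.mem_ball] at h1 ⊢
      linarith [dist_triangle (d' (j + 1)) (γ (ptI M (j + 1))) (γ (ptI M j))]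
  obtain ⟨γ', h0, h1, h2⟩ := loop_of_cov _ κ d' M hM (by simp [d', d, ptI_zero]) hcov
  have hnear : ∀ j < M, ∀ t : unitInterval, (j : ℝ) / M ≤ t → (t : ℝ) ≤ ((j : ℝ) + 1) / M →
      dist (γ t) (γ (ptI M j)) < r / 2 := by
    intro j hj t ht1 ht2
    apply hpart
    rw [ptI_val M _ hM hj.le, abs_of_nonneg (by linarith)]
    rw [add_div] at ht2
    linarith
  refine ⟨γ', h0, ?_, ?_, ?_⟩
  · intro t
    obtain ⟨j, hj, ht1, ht2⟩ := exists_index M hM t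
    exact (h2 j hj t ht1 ht2).1
  · intro t
    obtain ⟨j, hj, ht1, ht2⟩ := exists_index M hM t
    have h3 := (h2 j hj t ht1 ht2).2
    have h4 := hnear j hj t ht1 ht2
    rw [Metric.mem_ball] at h3
    have := dist_triangle_right (γ' t) (γ t) (γ (ptI M j))
    linarith
  · refine (measure_mono ?_).trans hκ3
    rintro y ⟨⟨hy1, hy2⟩, hy3⟩
    obtain ⟨t, ht⟩ := mem_iUnion.mp hy1
    obtain ⟨j, hj, ht1, ht2⟩ := exists_index M hM t
    have h4 := hnear j hj t ht1 ht2
    simp only [mem_iUnion, Finset.mem_range]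
    refine ⟨j, hj, ⟨hy2, ?_⟩, fun hk => hy3 (h1 j hj hk)⟩
    rw [Metric.mem_ball] at ht ⊢
    linarith [dist_triangle y (γ t) (γ (ptI M j))]

/-- Loops can be pushed into `U` with small displacement and small loss of measure. -/
def Steppable {N : ℕ} (U : Set C(unitInterval, Fin N → ℂ)) : Prop :=
  ∀ γ : C(unitInterval, Fin N → ℂ), γ 0 = γ 1 → ∀ δ : ℝ, 0 < δ → ∀ loss : ENNReal, loss ≠ 0 →
    ∃ γ' : C(unitInterval, Fin N → ℂ), γ' 0 = γ' 1 ∧ (∀ t, dist (γ' t) (γ t) < δ) ∧ γ' ∈ U ∧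
      volume (range γ \ range γ') ≤ loss

theorem gain {N : ℕ} (hN : 0 < N) (γ : C(unitInterval, Fin N → ℂ)) (hγ : γ 0 = γ 1) {δ : ℝ}
    (hδ : 0 < δ) : ∃ γ' : C(unitInterval, Fin N → ℂ), γ' 0 = γ' 1 ∧
      (∀ t, dist (γ' t) (γ t) < δ) ∧ volume (range γ) < volume (range γ') := by
  have : Nonempty (Fin N) := ⟨⟨0, hN⟩⟩
  set r := δ / 2 with hr
  have hr0 : 0 < r := by positivity
  set W := ⋃ t, Metric.ball (γ t) (r / 2) with hW
  have hWo : IsOpen W := isOpen_iUnion fun t => Metric.isOpen_ball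
  have hsub : range γ ⊆ W := by
    rintro _ ⟨t, rfl⟩
    exact mem_iUnion.mpr ⟨t, Metric.mem_ball_self (by positivity)⟩
  have hcomp : IsCompact (range γ) := isCompact_range γ.continuous
  have hne : (W \ range γ).Nonempty := by
    rw [nonempty_iff_ne_empty]
    intro h
    have h1 : W = range γ := subset_antisymm (sdiff_eq_empty.mp h) hsub
    have h2 : IsClopen (range γ) := ⟨hcomp.isClosed, h1 ▸ hWo⟩
    have h3 : range γ = univ := h2.eq_univ (range_nonempty _)
    exact noncompact_univ (Fin N → ℂ) (h3 ▸ hcomp)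
  have hpos : 0 < volume (W \ range γ) := (hWo.sdiff hcomp.isClosed).measure_pos _ hne
  have hWfin : volume W < ⊤ := by
    have : W ⊆ Metric.thickening (r / 2) (range γ) := by
      intro y hy
      obtain ⟨t, ht⟩ := mem_iUnion.mp hy
      exact Metric.mem_thickening_iff.mpr ⟨γ t, mem_range_self t, ht⟩
    exact (measure_mono this).trans_lt hcomp.isBounded.thickening.measure_lt_top
  have hfin : volume (W \ range γ) ≠ ⊤ := ((measure_mono sdiff_subset).trans_lt hWfin).ne
  obtain ⟨γ', h0, -, h1, h2⟩ := template γ hγ (X := univ) (D := univ) isOpen_univ subset_rfl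
    (r := r) (δ := r) hr0 le_rfl
    (fun t => ⟨γ t, mem_univ _, Metric.mem_ball_self (by positivity)⟩)
    (fun t x hx y hy => JoinedIn.of_segment_subset
      (by rw [univ_inter]; exact (convex_ball _ _).segment_subset hx.2 hy.2))
    (loss := volume (W \ range γ) / 2) (by simpa using hpos.ne')
  refine ⟨γ', h0, fun t => by have := h1 t; rw [hr] at this; linarith, ?_⟩
  rw [inter_univ, ← hW] at h2
  have e1 : volume W = volume (range γ) + volume (W \ range γ) := by
    rw [add_comm, measure_sdiff_add_inter _ hcomp.isClosed.measurableSet |>.symm,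
      inter_eq_right.mpr hsub]
  have e2 : volume W ≤ volume (range γ') + volume (W \ range γ) / 2 := by
    calc volume W ≤ volume (range γ' ∪ (W \ range γ')) := measure_mono (by
          intro y hy; by_cases h : y ∈ range γ' <;> simp [h, hy])
      _ ≤ _ := (measure_union_le _ _).trans (by gcongr)
  rw [e1] at e2
  by_contra hcon
  push Not at hcon
  have e3 := e2.trans (add_le_add_left hcon _)
  have hgf : volume (range γ) ≠ ⊤ := ((measure_mono hsub).trans_lt hWfin).ne
  have e4 := (ENNReal.add_le_add_iff_left hgf).mp e3
  exact absurd e4 (not_le.mpr (ENNReal.half_lt_self hpos.ne' hfin))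

theorem exists_line_poly {N : ℕ} (P : MvPolynomial (Fin N) ℂ) (x v : Fin N → ℂ) :
    ∃ Q : Polynomial ℂ, ∀ ζ : ℂ, Q.eval ζ = eval (x + ζ • v) P := by
  refine ⟨MvPolynomial.aeval (fun i => Polynomial.C (x i) + Polynomial.X * Polynomial.C (v i)) P,
    fun ζ => ?_⟩
  induction P using MvPolynomial.induction_on with
  | C a => simp
  | add p q hp hq => rw [map_add, map_add, Polynomial.eval_add, hp, hq]
  | mul_X p i hp => rw [map_mul, map_mul, Polynomial.eval_mul, hp]; simp; exact Or.inl (mul_comm _ _)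

theorem join_poly {N : ℕ} (P : MvPolynomial (Fin N) ℂ) {B : Set (Fin N → ℂ)} (hB : IsOpen B)
    (hBc : Convex ℝ B) {x y : Fin N → ℂ} (hx : x ∈ B) (hy : y ∈ B) (hPx : eval x P ≠ 0)
    (hPy : eval y P ≠ 0) : JoinedIn ({z | eval z P ≠ 0} ∩ B) x y := by
  obtain ⟨Q, hQ⟩ := exists_line_poly P x (y - x)
  have hQ0 : Q.eval 0 ≠ 0 := by rw [hQ]; simpa using hPx
  have hQ1 : Q.eval 1 ≠ 0 := by rw [hQ]; simpa using hPy
  have hQne : Q ≠ 0 := by rintro rfl; simp at hQ0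
  have hseg : IsCompact (segment ℝ x y) := by
    rw [segment_eq_image]
    exact isCompact_Icc.image (by fun_prop)
  obtain ⟨e, he, hthick⟩ := hseg.exists_thickening_subset_open hB (hBc.segment_subset hx hy)
  let bad : Finset ℝ := Q.roots.toFinset.image (fun ζ => ζ.im / (ζ.re * (1 - ζ.re)))
  have hpos : 0 < e / (‖y - x‖ + 1) := by positivity
  obtain ⟨s, hs, hsb⟩ := (Ioo_infinite hpos).exists_notMem_finset bad
  let ζ : ℝ → ℂ := fun t => (t : ℂ) + (s * t * (1 - t) : ℝ) * Complex.I
  have hre : ∀ t, (ζ t).re = t := by intro t; simp [ζ]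
  have him : ∀ t, (ζ t).im = s * t * (1 - t) := by intro t; simp [ζ]
  have hζ : Continuous ζ := by fun_prop
  refine JoinedIn.ofLine (f := fun t => x + ζ t • (y - x)) (by fun_prop) (by simp [ζ])
    (by simp [ζ]) ?_
  rintro _ ⟨t, ht, rfl⟩
  refine ⟨?_, ?_⟩
  · change eval (x + ζ t • (y - x)) P ≠ 0
    rw [← hQ]
    intro h
    by_cases h0 : t = 0
    · apply hQ0; rw [h0] at h; simpa [ζ] using h
    by_cases h1 : t = 1
    · apply hQ1; rw [h1] at h; simpa [ζ] using h
    apply hsb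
    refine Finset.mem_image.mpr ⟨ζ t, by simp [hQne, h], ?_⟩
    rw [hre, him]
    have : 1 - t ≠ 0 := sub_ne_zero.mpr (Ne.symm h1)
    field_simp
  · apply hthick
    refine Metric.mem_thickening_iff.mpr ⟨x + (t : ℂ) • (y - x), ?_, ?_⟩
    · rw [segment_eq_image']
      exact ⟨t, ht, by simp⟩
    · have : x + ζ t • (y - x) - (x + (t : ℂ) • (y - x)) =
          (((s * t * (1 - t) : ℝ) : ℂ) * Complex.I) • (y - x) := by
        simp only [ζ, add_smul]; abel
      rw [dist_eq_norm]
      change ‖x + ζ t • (y - x) - (x + (t : ℂ) • (y - x))‖ < e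
      rw [this, norm_smul, norm_mul, Complex.norm_I, mul_one, Complex.norm_real, Real.norm_eq_abs,
        abs_of_nonneg (by have := hs.1; have := ht.1; have := sub_nonneg.mpr ht.2; positivity)]
      have h1 : s * t * (1 - t) ≤ s := by
        nlinarith [hs.1, ht.1, ht.2, mul_nonneg ht.1 (sub_nonneg.mpr ht.2), mul_self_nonneg t]
      have h2 := hs.2
      rw [lt_div_iff₀ (by positivity)] at h2
      nlinarith [norm_nonneg (y - x), hs.1]

theorem exists_null_level {N : ℕ} (p : MvPolynomial (Fin N) ℂ) {e : ℝ} (he : 0 < e) :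
    ∃ c : ℂ, ‖c‖ < e ∧ volume {z : Fin N → ℂ | eval z (p + C c) = 0} = 0 := by
  have h := Measure.countable_meas_level_set_pos (μ := (volume : Measure (Fin N → ℂ)))
    (g := fun z => eval z p) (MvPolynomial.continuous_eval p).measurable
  obtain ⟨c, hc, hce⟩ := (h.dense_compl ℝ).exists_dist_lt 0 he
  refine ⟨-c, by simpa using hce, ?_⟩
  have : {z : Fin N → ℂ | eval z (p + C (-c)) = 0} = {z | eval z p = c} := by
    ext z; simp [add_neg_eq_zero]
  rw [this]
  simpa using hc

theorem step_zero {N : ℕ} (p : MvPolynomial (Fin N) ℂ) {e : ℝ} (he : 0 < e) :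
    Steppable {γ : C(unitInterval, Fin N → ℂ) | ∃ c : ℂ, ‖c‖ < e ∧
      ∀ t, eval (γ t) (p + C c) ≠ 0} := by
  intro γ hγ δ hδ loss hl
  obtain ⟨c, hc, hnull⟩ := exists_null_level p he
  set P := p + C c
  have hcont := MvPolynomial.continuous_eval P
  have hD : IsOpen {z : Fin N → ℂ | eval z P ≠ 0} := isOpen_ne_fun hcont continuous_const
  have hmeet : ∀ t, ({z : Fin N → ℂ | eval z P ≠ 0} ∩ Metric.ball (γ t) (δ / 2 / 2)).Nonempty := by
    intro t
    by_contra hcon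
    rw [not_nonempty_iff_eq_empty] at hcon
    have : Metric.ball (γ t) (δ / 2 / 2) ⊆ {z : Fin N → ℂ | eval z P = 0} := by
      intro z hz
      by_contra h
      have : z ∈ {z : Fin N → ℂ | eval z P ≠ 0} ∩ Metric.ball (γ t) (δ / 2 / 2) := ⟨h, hz⟩
      rw [hcon] at this
      exact this
    have h1 := measure_mono_null this hnull
    exact (Metric.measure_ball_pos volume (γ t) (by positivity)).ne' h1
  obtain ⟨γ', h0, h1, h2, h3⟩ := template γ hγ hD subset_rfl
    (r := δ / 2) (δ := δ / 2) (by positivity) le_rfl hmeet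
    (fun t x hx y hy => join_poly P Metric.isOpen_ball (convex_ball _ _) hx.2 hy.2 hx.1 hy.1) hl
  refine ⟨γ', h0, fun t => by linarith [h2 t], ⟨c, hc, h1⟩, ?_⟩
  have h4 : volume ({z : Fin N → ℂ | eval z P = 0} ∪
      (((⋃ t, Metric.ball (γ t) (δ / 2 / 2)) ∩ {z | (eval z) P ≠ 0}) \ range γ')) ≤ loss :=
    (measure_union_le _ _).trans (by rw [hnull, zero_add]; exact h3)
  refine (measure_mono ?_).trans h4
  rintro y ⟨⟨t, rfl⟩, hy⟩
  by_cases h : eval (γ t) P = 0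
  · exact Or.inl h
  · exact Or.inr ⟨⟨mem_iUnion.mpr ⟨t, Metric.mem_ball_self (by positivity)⟩, h⟩, hy⟩

theorem step_aux {T α β : ℂ} {s : ℝ} (hs : s ≤ 1 / 2) (hα : α ≠ 0) (hβ : ‖β‖ ≤ s * ‖α‖)
    (h : T * (α + β) = α) : ‖T - 1‖ ≤ 2 * s := by
  have h1 : (T - 1) * (α + β) = -β := by linear_combination h
  have h2 : ‖T - 1‖ * ‖α + β‖ = ‖β‖ := by rw [← norm_mul, h1, norm_neg]
  have h3 : ‖α‖ - ‖β‖ ≤ ‖α + β‖ := by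
    have := norm_sub_norm_le α (-β)
    simpa using this
  have h4 : 0 < ‖α‖ := norm_pos_iff.mpr hα
  have h5 : ‖α‖ / 2 ≤ ‖α + β‖ := by nlinarith
  have h6 : ‖T - 1‖ * (‖α‖ / 2) ≤ s * ‖α‖ :=
    (mul_le_mul_of_nonneg_left h5 (norm_nonneg _)).trans (h2.le.trans hβ)
  by_contra hcon
  push Not at hcon
  nlinarith

theorem norm_ratio {x : ℂ} {η R : ℝ} (hη : 0 < η) (hηR : η ≤ R) (hx : ‖x‖ ≤ R) (hre : η ≤ x.re) :
    ‖1 - x‖ ≤ Real.sqrt (1 - 4 * η / (1 + R) ^ 2) * ‖1 + x‖ := by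
  have hR : 0 < 1 + R := by linarith
  have e1 : ‖1 - x‖ ^ 2 = (1 - x.re) ^ 2 + x.im ^ 2 := by
    rw [← Complex.normSq_eq_norm_sq, Complex.normSq_apply]; simp; ring
  have e2 : ‖1 + x‖ ^ 2 = (1 + x.re) ^ 2 + x.im ^ 2 := by
    rw [← Complex.normSq_eq_norm_sq, Complex.normSq_apply]; simp; ring
  have h1 : ‖1 + x‖ ≤ 1 + R := (norm_add_le _ _).trans (by simpa using hx)
  have h0 : 0 ≤ 1 - 4 * η / (1 + R) ^ 2 := by
    rw [sub_nonneg, div_le_one (by positivity)]; nlinarith [sq_nonneg (1 - R)]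
  apply (sq_le_sq₀ (norm_nonneg _) (by positivity)).mp
  rw [mul_pow, Real.sq_sqrt h0]
  have h2 : ‖1 + x‖ ^ 2 ≤ (1 + R) ^ 2 := by gcongr
  have h3 : 4 * η / (1 + R) ^ 2 * ‖1 + x‖ ^ 2 ≤ 4 * η := by
    rw [div_mul_eq_mul_div, div_le_iff₀ (by positivity)]
    gcongr
  nlinarith

theorem spectrum_aux {A : Type*} [NormedRing A] [CompleteSpace A] [NormedAlgebra ℂ A]
    (B : Subalgebra ℂ A) (hB : IsClosed (B : Set A)) (a : B)
    (ha : ∀ z ∈ spectrum ℂ (a : A), z.re ≠ 0) : ∀ z ∈ spectrum ℂ a, z.re ≠ 0 := by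
    have : CompleteSpace B := hB.completeSpace_coe
    intro z hz hre
    let S := {t : ℝ | (t : ℂ) * Complex.I ∈ spectrum ℂ a}
    have hScl : IsClosed S := (spectrum.isClosed a).preimage (by fun_prop)
    have hSb : S ⊆ Metric.closedBall 0 (‖a‖ * ‖(1 : B)‖) := by
      intro t ht
      have := spectrum.norm_le_norm_mul_of_mem ht
      simpa using this
    have hSc : IsCompact S := (isCompact_closedBall _ _).of_isClosed_subset hScl hSb
    have hSne : S.Nonempty := ⟨z.im, by
      have : (z.im : ℂ) * Complex.I = z := by
        apply Complex.ext <;> simp [hre]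
      simpa [S, this] using hz⟩
    obtain ⟨t, ht, htmax⟩ := hSc.exists_isGreatest hSne
    have hfr : (t : ℂ) * Complex.I ∈ frontier (spectrum ℂ a) := by
      rw [(spectrum.isClosed a).frontier_eq]
      refine ⟨ht, fun hinterior => ?_⟩
      have hopen : IsOpen {s : ℝ | (s : ℂ) * Complex.I ∈ interior (spectrum ℂ a)} :=
        isOpen_interior.preimage (by fun_prop)
      obtain ⟨r, hr, hrb⟩ := Metric.isOpen_iff.mp hopen t hinterior
      have h1 : t + r / 2 ∈ S := by
        apply interior_subset
          (hrb (show t + r / 2 ∈ Metric.ball t r by simp [abs_of_pos hr]; exact hr))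
      have := htmax h1
      linarith
    have := hB
    exact ha _ (Subalgebra.frontier_spectrum (𝕜 := ℂ) B a hfr) (by simp)

theorem stepPoly_center {η R e : ℝ} (hη : 0 < η) (hηR : η ≤ R) (he : 0 < e) :
    ∃ T : Polynomial ℂ, ∀ z : ℂ, ‖z‖ ≤ R →
      (z.re ≤ -η → ‖T.eval z‖ < e) ∧ (η ≤ z.re → ‖T.eval z - 1‖ < e) := by
  set K : Set ℂ := {z | ‖z‖ ≤ R ∧ η ≤ |z.re|} with hKdef
  have hKc : IsCompact K := by
    refine (isCompact_closedBall (0 : ℂ) R).of_isClosed_subset ?_ ?_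
    · exact (isClosed_le continuous_norm continuous_const).inter
        (isClosed_le continuous_const Complex.continuous_re.abs)
    · intro z hz; simpa using hz.1
  have : CompactSpace K := isCompact_iff_compactSpace.mp hKc
  have hR : 0 < R := hη.trans_le hηR
  have hηK : (η : ℂ) ∈ K := by simp [K, abs_of_pos hη, hηR]
  have : Nonempty K := ⟨⟨_, hηK⟩⟩
  let B := (polynomialFunctions K).topologicalClosure
  have hB : IsClosed (B : Set C(K, ℂ)) := (polynomialFunctions K).isClosed_topologicalClosure
  have : CompleteSpace B := hB.completeSpace_coe
  let a : B := ⟨Polynomial.toContinuousMapOnAlgHom K Polynomial.X,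
    (polynomialFunctions K).le_topologicalClosure ⟨Polynomial.X, by simp⟩⟩
  have haeval : ∀ (p : Polynomial ℂ) (x : K), ((Polynomial.aeval a p : B) : C(K, ℂ)) x = p.eval (x : ℂ) := by
    intro p x
    have : ((Polynomial.aeval a p : B) : C(K, ℂ)) = Polynomial.aeval (a : C(K, ℂ)) p := by
      exact (Polynomial.aeval_algHom_apply B.val a p).symm
    rw [this]
    induction p using Polynomial.induction_on' with
    | add p q hp hq =>
      rw [map_add, ContinuousMap.add_apply, Polynomial.eval_add]
      rw [hp (Polynomial.aeval_algHom_apply B.val a p).symm,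
        hq (Polynomial.aeval_algHom_apply B.val a q).symm]
    | monomial n c => simp [Polynomial.aeval_monomial, a, Algebra.algebraMap_eq_smul_one]
  have hσ : ∀ z ∈ spectrum ℂ a, z.re ≠ 0 := by
    refine spectrum_aux B hB a ?_
    intro z hz
    rw [ContinuousMap.spectrum_eq_range] at hz
    obtain ⟨x, rfl⟩ := hz
    have h3 : (a : C(K, ℂ)) x = (x : ℂ) := by simp [a]
    have h4 := x.2.2
    rw [h3]
    intro h5
    rw [h5] at h4
    simp at h4
    linarith
  set ρ := Real.sqrt (1 - 4 * η / (1 + R) ^ 2) with hρ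
  have hρ0 : 0 ≤ ρ := Real.sqrt_nonneg _
  have hρ1 : ρ < 1 := by
    rw [hρ, Real.sqrt_lt' one_pos]
    have : 0 < 4 * η / (1 + R) ^ 2 := by positivity
    linarith
  obtain ⟨m, hm⟩ := exists_pow_lt_of_lt_one (show 0 < min (1 / 2) (e / 8) by positivity) hρ1
  have hm0 : m ≠ 0 := by
    rintro rfl
    have := hm.trans_le (min_le_left _ _)
    norm_num at this
  let Dp : Polynomial ℂ := (1 + Polynomial.X) ^ m + (1 - Polynomial.X) ^ m
  have hunit : IsUnit (Polynomial.aeval a Dp) := by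
    rw [← spectrum.zero_notMem_iff ℂ, spectrum.map_polynomial_aeval]
    rintro ⟨z, hz, hz0⟩
    apply hσ z hz
    have h1 : (1 + z) ^ m = -(1 - z) ^ m := by
      have : (1 + z) ^ m + (1 - z) ^ m = 0 := by simpa [Dp] using hz0
      linear_combination this
    have h2 : ‖1 + z‖ ^ m = ‖1 - z‖ ^ m := by rw [← norm_pow, h1, norm_neg, norm_pow]
    have h3 : ‖1 + z‖ = ‖1 - z‖ := (pow_left_inj₀ (norm_nonneg _) (norm_nonneg _) hm0).mp h2
    have h4 : ‖1 + z‖ ^ 2 = ‖1 - z‖ ^ 2 := by rw [h3]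
    rw [← Complex.normSq_eq_norm_sq, ← Complex.normSq_eq_norm_sq, Complex.normSq_apply,
      Complex.normSq_apply] at h4
    simp at h4
    nlinarith
  obtain ⟨b, hb⟩ := hunit.exists_right_inv
  let TB : B := Polynomial.aeval a ((1 + Polynomial.X) ^ m : Polynomial ℂ) * b
  have hTB : ∀ x : K, (TB : C(K, ℂ)) x * ((1 + (x : ℂ)) ^ m + (1 - (x : ℂ)) ^ m) = (1 + (x : ℂ)) ^ m := by
    intro x
    have h1 := haeval Dp x
    have h2 := haeval ((1 + Polynomial.X) ^ m) x
    have h3 : ((Polynomial.aeval a Dp : B) : C(K, ℂ)) x * (b : C(K, ℂ)) x = 1 := by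
      have : ((Polynomial.aeval a Dp * b : B) : C(K, ℂ)) x = 1 := by rw [hb]; rfl
      exact this
    have h4 : (TB : C(K, ℂ)) x = ((Polynomial.aeval a ((1 + Polynomial.X) ^ m : Polynomial ℂ) : B) : C(K, ℂ)) x * (b : C(K, ℂ)) x := rfl
    rw [h1] at h3
    rw [h4, h2]
    simp only [Dp, Polynomial.eval_add, Polynomial.eval_sub, Polynomial.eval_pow,
      Polynomial.eval_one, Polynomial.eval_X] at h3 ⊢
    linear_combination ((1 + (x : ℂ)) ^ m) * h3
  have hmem : (TB : C(K, ℂ)) ∈ closure (polynomialFunctions K : Set C(K, ℂ)) := TB.2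
  obtain ⟨g, hg, hdist⟩ := Metric.mem_closure_iff.mp hmem (e / 2) (by positivity)
  rw [SetLike.mem_coe, ← SetLike.mem_coe, polynomialFunctions_coe] at hg
  obtain ⟨T, rfl⟩ := hg
  have hd : ∀ x : K, ‖(TB : C(K, ℂ)) x - T.eval (x : ℂ)‖ < e / 2 := by
    intro x
    have := (ContinuousMap.dist_lt_iff (by positivity)).mp hdist x
    rw [dist_eq_norm] at this
    simpa using this
  have hs1 := (hm.trans_le (min_le_left _ _)).le
  have hs2 := (hm.trans_le (min_le_right _ _)).le
  refine ⟨T, fun z hz => ⟨fun hre => ?_, fun hre => ?_⟩⟩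
  · have hzK : z ∈ K := ⟨hz, by rw [abs_of_neg (by linarith)]; linarith⟩
    have h1 := hTB ⟨z, hzK⟩
    have h2 := hd ⟨z, hzK⟩
    set τ := (TB : C(K, ℂ)) ⟨z, hzK⟩
    have hr := norm_ratio (x := -z) hη hηR (by simpa using hz) (by simp; linarith)
    rw [sub_neg_eq_add, ← sub_eq_add_neg] at hr
    have h3 : ‖(1 - τ) - 1‖ ≤ 2 * ρ ^ m := by
      refine step_aux (α := (1 - z) ^ m) (β := (1 + z) ^ m) hs1 ?_ ?_ ?_
      · apply pow_ne_zero
        intro h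
        have : (1 - z).re = 0 := by rw [h]; simp
        simp at this
        linarith
      · rw [norm_pow, norm_pow, ← mul_pow]
        exact pow_le_pow_left₀ (norm_nonneg _) hr m
      · simp only at h1
        linear_combination -h1
    have h4 : ‖τ‖ ≤ 2 * ρ ^ m := by
      rwa [show (1 - τ) - 1 = -τ by ring, norm_neg] at h3
    calc ‖T.eval z‖ = ‖τ - (τ - T.eval z)‖ := by congr 1; ring
      _ ≤ ‖τ‖ + ‖τ - T.eval z‖ := norm_sub_le _ _
      _ < e := by simp only at h2; linarith
  · have hzK : z ∈ K := ⟨hz, by rw [abs_of_pos (by linarith)]; linarith⟩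
    have h1 := hTB ⟨z, hzK⟩
    have h2 := hd ⟨z, hzK⟩
    set τ := (TB : C(K, ℂ)) ⟨z, hzK⟩
    have hr := norm_ratio (x := z) hη hηR hz hre
    have h3 : ‖τ - 1‖ ≤ 2 * ρ ^ m := by
      refine step_aux (α := (1 + z) ^ m) (β := (1 - z) ^ m) hs1 ?_ ?_ h1
      · apply pow_ne_zero
        intro h
        have : (1 + z).re = 0 := by rw [h]; simp
        simp at this
        linarith
      · rw [norm_pow, norm_pow, ← mul_pow]
        exact pow_le_pow_left₀ (norm_nonneg _) hr m
    calc ‖T.eval z - 1‖ = ‖(τ - 1) - (τ - T.eval z)‖ := by congr 1; ring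
      _ ≤ ‖τ - 1‖ + ‖τ - T.eval z‖ := norm_sub_le _ _
      _ < e := by simp only at h2; linarith

theorem stepPoly {a b : ℝ} (hab : a < b) (R : ℝ) {e : ℝ} (he : 0 < e) :
    ∃ T : Polynomial ℂ, ∀ z : ℂ, ‖z‖ ≤ R →
      (z.re ≤ a → ‖T.eval z‖ < e) ∧ (b ≤ z.re → ‖T.eval z - 1‖ < e) := by
  obtain ⟨T, hT⟩ := stepPoly_center (η := (b - a) / 2) (R := max ((b - a) / 2) (R + |(a + b) / 2|))
    (by linarith) (le_max_left _ _) he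
  refine ⟨T.comp (Polynomial.X - Polynomial.C (((a + b) / 2 : ℝ) : ℂ)), fun z hz => ?_⟩
  have h1 := hT (z - ((a + b) / 2 : ℝ)) (by
    refine le_trans ?_ (le_max_right _ _)
    refine (norm_sub_le _ _).trans ?_
    rw [Complex.norm_real, Real.norm_eq_abs]
    linarith)
  simp only [Polynomial.eval_comp, Polynomial.eval_sub, Polynomial.eval_X, Polynomial.eval_C]
  constructor
  · intro h; apply h1.1; simp only [Complex.sub_re, Complex.ofReal_re]; linarith
  · intro h; apply h1.2; simp only [Complex.sub_re, Complex.ofReal_re]; linarith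

theorem local_inv (P : Polynomial ℂ) {l : ℂ} (h0 : P.eval l = 0)
    (h1 : P.derivative.eval l ≠ 0) {δ : ℝ} (hδ : 0 < δ) :
    ∃ r > 0, ∃ G : ℂ → ℂ, ContinuousOn G (Metric.ball 0 r) ∧ G 0 = l ∧
      ∀ ν ∈ Metric.ball (0 : ℂ) r, P.eval (G ν) = ν ∧ ‖G ν - l‖ < δ := by
  have hs : HasStrictDerivAt (fun z => P.eval z) (P.derivative.eval l) l := P.hasStrictDerivAt l
  have hF := hs.hasStrictFDerivAt_equiv h1
  set H := hF.toOpenPartialHomeomorph (fun z => P.eval z) with hH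
  have hl : l ∈ H.source := hF.mem_toOpenPartialHomeomorph_source
  have hHc : ∀ z, H z = P.eval z := fun z => by rw [hH, hF.toOpenPartialHomeomorph_coe]
  have h0t : (0 : ℂ) ∈ H.target := by
    have := H.map_source hl
    rwa [hHc, h0] at this
  have hG0 : H.symm 0 = l := by
    rw [← h0, ← hHc]; exact H.left_inv hl
  have hop : IsOpen (H.target ∩ H.symm ⁻¹' Metric.ball l δ) :=
    H.symm.continuousOn.isOpen_inter_preimage H.open_target Metric.isOpen_ball
  obtain ⟨r, hr, hrb⟩ := Metric.isOpen_iff.mp hop 0 ⟨h0t, by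
    simp [mem_preimage, hG0, hδ]⟩
  refine ⟨r, hr, H.symm, H.symm.continuousOn.mono fun z hz => (hrb hz).1, hG0, fun ν hν => ?_⟩
  obtain ⟨ha, hb⟩ := hrb hν
  refine ⟨by rw [← hHc]; exact H.right_inv ha, ?_⟩
  rw [← dist_eq_norm]; exact hb

theorem null_hyper {N : ℕ} (i : Fin N) {ζ : ℂ} (hζ : ζ ≠ 0) (g : ℝ) :
    volume {z : Fin N → ℂ | (ζ * z i).re = g} = 0 := by
  let f : (Fin N → ℂ) →ₗ[ℝ] ℝ :=
    { toFun := fun z => (ζ * z i).re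
      map_add' := by intro x y; simp; ring
      map_smul' := by intro c x; simp; ring }
  have hf : LinearMap.ker f ≠ ⊤ := by
    intro h
    have : Pi.single i ζ⁻¹ ∈ LinearMap.ker f := by rw [h]; trivial
    rw [LinearMap.mem_ker] at this
    have h2 : (ζ * (Pi.single i ζ⁻¹ : Fin N → ℂ) i).re = 0 := this
    rw [Pi.single_eq_same, mul_inv_cancel₀ hζ] at h2
    simp at h2
  have h0 := Measure.addHaar_submodule (volume : Measure (Fin N → ℂ)) (LinearMap.ker f) hf
  let v : Fin N → ℂ := Pi.single i (ζ⁻¹ * g)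
  have h1 : {z : Fin N → ℂ | (ζ * z i).re = g} = (fun z => z + -v) ⁻¹' (LinearMap.ker f : Set _) := by
    ext z
    have h2 : ζ * (z + -v) i = ζ * z i - g := by
      simp only [v, Pi.add_apply, Pi.neg_apply, Pi.single_eq_same]
      field_simp
      ring
    have h3 : z + -v ∈ LinearMap.ker f ↔ (ζ * (z + -v) i).re = 0 := LinearMap.mem_ker
    rw [mem_ofPred_eq, mem_preimage, SetLike.mem_coe, h3, h2, Complex.sub_re, Complex.ofReal_re,
      sub_eq_zero]
  rw [h1, measure_preimage_add_right, h0]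

theorem small_nbhd {N : ℕ} {f : (Fin N → ℂ) → ℝ} (hf : Continuous f) {K : Set (Fin N → ℂ)}
    (hK : IsCompact K) {loss : ENNReal} (hl : loss ≠ 0) :
    ∃ η > 0, volume (K ∩ {z | 0 < f z ∧ f z ≤ η}) ≤ loss := by
  let A : ℕ → Set (Fin N → ℂ) := fun n => K ∩ {z | 0 < f z ∧ f z ≤ 1 / ((n : ℝ) + 1)}
  have hA : ∀ n, NullMeasurableSet (A n) volume := fun n =>
    (hK.isClosed.measurableSet.inter ((isOpen_lt continuous_const hf).measurableSet.inter
      (isClosed_le hf continuous_const).measurableSet)).nullMeasurableSet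
  have hanti : Antitone A := by
    intro m n hmn z hz
    refine ⟨hz.1, hz.2.1, hz.2.2.trans ?_⟩
    have : (m : ℝ) ≤ n := by exact_mod_cast hmn
    gcongr
  have hlim := tendsto_measure_iInter_atTop hA hanti
    ⟨0, ((measure_mono inter_subset_left).trans_lt hK.measure_lt_top).ne⟩
  have hemp : ⋂ n, A n = ∅ := by
    rw [eq_empty_iff_forall_notMem]
    intro z hz
    rw [mem_iInter] at hz
    have h0 : 0 < f z := (hz 0).2.1
    obtain ⟨n, hn⟩ := exists_nat_one_div_lt h0
    exact absurd ((hz n).2.2) (not_le.mpr hn)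
  rw [hemp, measure_empty] at hlim
  obtain ⟨n, hn⟩ := (hlim.eventually (gt_mem_nhds (pos_iff_ne_zero.mpr hl))).exists
  exact ⟨1 / ((n : ℝ) + 1), by positivity, hn.le⟩

theorem poly_pair {R η e : ℝ} (hη : 0 < η) (he : 0 < e) :
    ∃ η' : ℝ, 0 < η' ∧ η' < η ∧ ∃ T q : Polynomial ℂ, ∀ w : ℂ, ‖w‖ ≤ R →
      (w.re ≤ -η' → ‖T.eval w‖ < e) ∧ (η' ≤ w.re → ‖T.eval w - 1‖ < e) ∧
      (η ≤ |w.re| → ‖q.eval w‖ < 1 / 2) ∧ (|w.re| ≤ η' → 5 / 4 < ‖q.eval w‖) := by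
  obtain ⟨T₁, h₁⟩ := stepPoly (a := -η) (b := 0) (by linarith) R (e := 1 / 8) (by norm_num)
  obtain ⟨T₂, h₂⟩ := stepPoly (a := 0) (b := η) (by linarith) R (e := 1 / 8) (by norm_num)
  let q : Polynomial ℂ := 2 * (T₁ - T₂)
  have hq : ∀ w, q.eval w = 2 * (T₁.eval w - T₂.eval w) := by intro w; simp [q]
  have huc : UniformContinuousOn (fun w => q.eval w) (Metric.closedBall (0 : ℂ) R) :=
    (isCompact_closedBall _ _).uniformContinuousOn_of_continuous q.continuous.continuousOn
  obtain ⟨d, hd, hdd⟩ := Metric.uniformContinuousOn_iff.mp huc (1 / 4) (by norm_num)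
  have hm : 0 < min (d / 2) (η / 2) := by positivity
  obtain ⟨T, hT⟩ := stepPoly (a := -min (d / 2) (η / 2)) (b := min (d / 2) (η / 2))
    (by linarith) R he
  refine ⟨min (d / 2) (η / 2), hm, (min_le_right _ _).trans_lt (by linarith), T, q,
    fun w hw => ⟨(hT w hw).1, (hT w hw).2, fun h => ?_, fun h => ?_⟩⟩
  · rw [hq, norm_mul, Complex.norm_two]
    rcases le_abs.mp h with h | h
    · have a1 := (h₁ w hw).2 (by linarith)
      have a2 := (h₂ w hw).2 (by linarith)
      have : T₁.eval w - T₂.eval w = (T₁.eval w - 1) - (T₂.eval w - 1) := by ring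
      rw [this]
      linarith [norm_sub_le (T₁.eval w - 1) (T₂.eval w - 1)]
    · have a1 := (h₁ w hw).1 (by linarith)
      have a2 := (h₂ w hw).1 (by linarith)
      linarith [norm_sub_le (T₁.eval w) (T₂.eval w)]
  · let w₀ : ℂ := (w.im : ℂ) * Complex.I
    have hw0 : ‖w₀‖ ≤ R := by
      simp only [w₀, norm_mul, Complex.norm_I, mul_one, Complex.norm_real, Real.norm_eq_abs]
      exact (Complex.abs_im_le_norm w).trans hw
    have hre : w₀.re = 0 := by simp [w₀]
    have a1 := (h₁ w₀ hw0).2 (by linarith)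
    have a2 := (h₂ w₀ hw0).1 (by linarith)
    have hdist : dist w w₀ < d := by
      have : w - w₀ = (w.re : ℂ) := by apply Complex.ext <;> simp [w₀]
      rw [dist_eq_norm, this, Complex.norm_real, Real.norm_eq_abs]
      exact (h.trans (min_le_left _ _)).trans_lt (by linarith)
    have a3 := hdd w (by simpa using hw) w₀ (by simpa using hw0) hdist
    rw [dist_eq_norm] at a3
    have e1 : (2 : ℂ) = q.eval w - (q.eval w - q.eval w₀) - 2 * (T₁.eval w₀ - 1) + 2 * T₂.eval w₀ := by
      rw [hq w₀]; ring
    have e2 : ‖(2 : ℂ)‖ ≤ ‖q.eval w‖ + ‖q.eval w - q.eval w₀‖ + ‖2 * (T₁.eval w₀ - 1)‖ +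
        ‖2 * T₂.eval w₀‖ := by
      calc ‖(2 : ℂ)‖ = ‖q.eval w - (q.eval w - q.eval w₀) - 2 * (T₁.eval w₀ - 1) + 2 * T₂.eval w₀‖ :=
            congrArg _ e1
        _ ≤ _ := (norm_add_le _ _).trans (by
            gcongr
            exact (norm_sub_le _ _).trans (by gcongr; exact norm_sub_le _ _))
    rw [norm_mul, norm_mul, Complex.norm_two] at e2
    linarith

/-- finite nets of discs -/
theorem disc_net (R : ℝ) {r : ℝ} (hr : 0 < r) :
    ∃ L : Finset ℂ, ∀ v : ℂ, ‖v‖ ≤ R → ∃ l ∈ L, ‖l - v‖ < r := by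
  obtain ⟨t, ht, htf, htc⟩ := finite_cover_balls_of_compact (isCompact_closedBall (0 : ℂ) R) hr
  refine ⟨htf.toFinset, fun v hv => ?_⟩
  have := htc (show v ∈ Metric.closedBall (0 : ℂ) R by simpa using hv)
  simp only [mem_iUnion, Metric.mem_ball] at this
  obtain ⟨l, hl, hlv⟩ := this
  exact ⟨l, by simpa using hl, by rwa [← dist_eq_norm, dist_comm]⟩

theorem eval_aeval_poly {N : ℕ} (P : MvPolynomial (Fin N) ℂ) (T : Polynomial ℂ) (z : Fin N → ℂ) :
    eval z (Polynomial.aeval P T) = T.eval (eval z P) := by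
  induction T using Polynomial.induction_on' with
  | add p q hp hq => simp [hp, hq]
  | monomial n c => simp [Polynomial.aeval_monomial, MvPolynomial.algebraMap_eq]

/-- the affine function `ζ z_i - g` -/
def wf {N : ℕ} (i : Fin N) (ζ : ℂ) (g : ℝ) (z : Fin N → ℂ) : ℂ := ζ * z i - g

/-- open set where `F` looks like a step function of `Re (ζ z_i - g)` -/
def OF {N : ℕ} (F : MvPolynomial (Fin N) ℂ) (i : Fin N) (ζ : ℂ) (g e : ℝ) : Set (Fin N → ℂ) :=
  {z | (-e < (wf i ζ g z).re ∨ ‖eval z F‖ < e) ∧ ((wf i ζ g z).re < e ∨ ‖eval z F - 1‖ < e) ∧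
    ∃ s ∈ Icc (0 : ℝ) 1, ‖eval z F - s‖ < e}

/-- change two coordinates -/
def mkp {N : ℕ} (i i' : Fin N) (ζ : ℂ) (g : ℝ) (x : Fin N → ℂ) (a b : ℂ) : Fin N → ℂ :=
  Function.update (Function.update x i (ζ⁻¹ * (a + g))) i' b

theorem continuous_wf {N : ℕ} (i : Fin N) (ζ : ℂ) (g : ℝ) : Continuous (wf i ζ g) := by
  unfold wf; fun_prop

theorem isOpen_OF {N : ℕ} (F : MvPolynomial (Fin N) ℂ) (i : Fin N) (ζ : ℂ) (g e : ℝ) :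
    IsOpen (OF F i ζ g e) := by
  have hF := MvPolynomial.continuous_eval F
  have hw := Complex.continuous_re.comp (continuous_wf i ζ g)
  have h1 := (isOpen_lt (continuous_const (y := -e)) hw).union (isOpen_lt hF.norm (continuous_const (y := e)))
  have h2 := (isOpen_lt hw (continuous_const (y := e))).union
    (isOpen_lt (hF.sub (continuous_const (y := (1 : ℂ)))).norm (continuous_const (y := e)))
  have h3 : IsOpen (⋃ s ∈ Icc (0 : ℝ) 1, {z : Fin N → ℂ | ‖eval z F - s‖ < e}) :=
    isOpen_biUnion fun s _ => isOpen_lt (hF.sub continuous_const).norm continuous_const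
  convert h1.inter (h2.inter h3) using 1
  ext z
  simp [OF]

theorem wf_mkp {N : ℕ} {i i' : Fin N} (hi : i ≠ i') {ζ : ℂ} (hζ : ζ ≠ 0) (g : ℝ) (x : Fin N → ℂ)
    (a b : ℂ) : wf i ζ g (mkp i i' ζ g x a b) = a := by
  simp only [wf, mkp, Function.update_of_ne hi, Function.update_self]
  rw [mul_inv_cancel_left₀ hζ]; ring

theorem mkp_apply {N : ℕ} (i i' : Fin N) (ζ : ℂ) (g : ℝ) (x : Fin N → ℂ) (a b : ℂ) :
    mkp i i' ζ g x a b i' = b := by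
  simp [mkp]

theorem dist_mkp {N : ℕ} (i i' : Fin N) {ζ : ℂ} (hζ : ‖ζ‖ = 1) (g : ℝ) (x : Fin N → ℂ)
    (a b : ℂ) {s : ℝ} (hs : 0 < s) (ha : ‖a - wf i ζ g x‖ < s) (hb : ‖b - x i'‖ < s) :
    dist (mkp i i' ζ g x a b) x < s := by
  have hζ0 : ζ ≠ 0 := by rintro rfl; simp at hζ
  rw [dist_pi_lt_iff hs]
  intro k
  rw [dist_eq_norm]
  by_cases h : k = i'
  · subst h; rwa [mkp_apply]
  · by_cases h2 : k = i
    · subst h2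
      simp only [mkp, Function.update_of_ne h, Function.update_self]
      have : ζ⁻¹ * (a + g) - x k = ζ⁻¹ * (a - wf k ζ g x) := by
        unfold wf; field_simp; ring
      rw [this, norm_mul, norm_inv, hζ]; simpa using ha
    · simp only [mkp, Function.update_of_ne h, Function.update_of_ne h2]
      simpa using hs

theorem join_u {N : ℕ} (i i' : Fin N) (ζ : ℂ) (g : ℝ) (x : Fin N → ℂ) {Y : Set (Fin N → ℂ)}
    {u₀ u₁ : ℝ} (hu : u₀ ≤ u₁) (y : ℝ) {H : ℝ → ℂ} (hH : ContinuousOn H (Icc u₀ u₁))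
    (h : ∀ u ∈ Icc u₀ u₁, mkp i i' ζ g x (u + y * Complex.I) (H u) ∈ Y) :
    JoinedIn Y (mkp i i' ζ g x (u₀ + y * Complex.I) (H u₀))
      (mkp i i' ζ g x (u₁ + y * Complex.I) (H u₁)) := by
  have hmem : ∀ s ∈ Icc (0 : ℝ) 1, u₀ + s * (u₁ - u₀) ∈ Icc u₀ u₁ := by
    intro s hs
    constructor
    · nlinarith [hs.1, hs.2]
    · nlinarith [hs.1, hs.2]
  have hc : ContinuousOn (fun s : ℝ => H (u₀ + s * (u₁ - u₀))) (Icc 0 1) :=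
    hH.comp (f := fun s : ℝ => u₀ + s * (u₁ - u₀)) (by fun_prop) hmem
  refine JoinedIn.ofLine (f := fun s : ℝ => mkp i i' ζ g x ((u₀ + s * (u₁ - u₀) : ℝ) + y * Complex.I)
    (H (u₀ + s * (u₁ - u₀)))) ?_ (by simp) (by simp) ?_
  · have hj : Continuous (fun ab : ℂ × ℂ => mkp i i' ζ g x ab.1 ab.2) := by
      unfold mkp
      exact (continuous_const.update i (by fun_prop)).update i' continuous_snd
    exact hj.comp_continuousOn (f := fun s : ℝ => (((u₀ + s * (u₁ - u₀) : ℝ) + y * Complex.I : ℂ),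
      H (u₀ + s * (u₁ - u₀)))) (ContinuousOn.prodMk (by fun_prop) hc)
  · rintro _ ⟨s, hs, rfl⟩
    exact h _ (hmem s hs)

theorem convex_wf {N : ℕ} (i : Fin N) (ζ : ℂ) (g η : ℝ) :
    Convex ℝ {z : Fin N → ℂ | (wf i ζ g z).re < -η} ∧
    Convex ℝ {z : Fin N → ℂ | η < (wf i ζ g z).re} := by
  have hl : IsLinearMap ℝ (fun z : Fin N → ℂ => (ζ * z i).re) :=
    { map_add := by intro x y; simp; ring
      map_smul := by intro c x; simp; ring }
  constructor
  · have hh : {z : Fin N → ℂ | (wf i ζ g z).re < -η} = {z | (ζ * z i).re < -η + g} := by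
      ext z
      change (wf i ζ g z).re < -η ↔ (ζ * z i).re < -η + g
      rw [wf, Complex.sub_re, Complex.ofReal_re]
      constructor <;> intro h <;> linarith
    rw [hh]; exact convex_halfSpace_lt hl (-η + g)
  · have hh : {z : Fin N → ℂ | η < (wf i ζ g z).re} = {z | η + g < (ζ * z i).re} := by
      ext z
      change η < (wf i ζ g z).re ↔ η + g < (ζ * z i).re
      rw [wf, Complex.sub_re, Complex.ofReal_re]
      constructor <;> intro h <;> linarith
    rw [hh]; exact convex_halfSpace_gt hl (η + g)

theorem join_T {N : ℕ} {i i' : Fin N} (hi : i ≠ i') {ζ : ℂ} (hζ : ‖ζ‖ = 1) (g : ℝ)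
    {X : Set (Fin N → ℂ)} {c : Fin N → ℂ} {r η η' R : ℝ} (hη : 0 < η)
    (hη' : 0 < η') (hηη : η' < η) (hηr : η ≤ r) (L : Finset ℂ)
    (hR : ∀ z ∈ Metric.ball c (10 * r), ‖z i'‖ ≤ R ∧ ‖wf i ζ g z‖ ≤ R)
    (hL : ∀ v : ℂ, ‖v‖ ≤ R → ∃ l ∈ L, ‖l - v‖ < r)
    (H1 : ∀ z ∈ Metric.ball c (10 * r), η < |(wf i ζ g z).re| → z ∈ X)
    (H2 : ∀ z ∈ Metric.ball c (10 * r), η' ≤ |(wf i ζ g z).re| → |(wf i ζ g z).re| ≤ 2 * η →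
      z i' ∈ L → z ∈ X)
    (H3 : ∀ l ∈ L, ∀ y : ℝ, |y| ≤ R → ∃ H : ℝ → ℂ, ContinuousOn H (Icc (-η') η') ∧
      H (-η') = l ∧ H η' = l ∧ (∀ u ∈ Icc (-η') η', ‖H u - l‖ < r) ∧
      ∀ z ∈ Metric.ball c (10 * r), ∀ u ∈ Icc (-η') η', wf i ζ g z = u + y * Complex.I →
        z i' = H u → z ∈ X)
    {x y : Fin N → ℂ} (hx : x ∈ Metric.ball c r) (hy : y ∈ Metric.ball c r)
    (hx' : η < |(wf i ζ g x).re|) (hy' : η < |(wf i ζ g y).re|) :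
    JoinedIn (X ∩ Metric.ball c (10 * r)) x y := by
  have hζ0 : ζ ≠ 0 := by rintro rfl; simp at hζ
  have hr : 0 < r := hη.trans_le hηr
  have hsub : Metric.ball c r ⊆ Metric.ball c (10 * r) := Metric.ball_subset_ball (by linarith)
  have hcb : Convex ℝ (Metric.ball c (10 * r)) := convex_ball _ _
  -- segments on one side
  have segL : ∀ a b : Fin N → ℂ, a ∈ Metric.ball c (10 * r) → b ∈ Metric.ball c (10 * r) →
      (wf i ζ g a).re < -η → (wf i ζ g b).re < -η → JoinedIn (X ∩ Metric.ball c (10 * r)) a b := by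
    intro a b ha hb ha' hb'
    refine JoinedIn.of_segment_subset fun z hz => ?_
    have h1 := hcb.segment_subset ha hb hz
    have h2 : (wf i ζ g z).re < -η := (convex_wf i ζ g η).1.segment_subset ha' hb' hz
    exact ⟨H1 z h1 (by rw [lt_abs]; right; linarith), h1⟩
  have segR : ∀ a b : Fin N → ℂ, a ∈ Metric.ball c (10 * r) → b ∈ Metric.ball c (10 * r) →
      η < (wf i ζ g a).re → η < (wf i ζ g b).re → JoinedIn (X ∩ Metric.ball c (10 * r)) a b := by
    intro a b ha hb ha' hb'
    refine JoinedIn.of_segment_subset fun z hz => ?_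
    have h1 := hcb.segment_subset ha hb hz
    have h2 : η < (wf i ζ g z).re := (convex_wf i ζ g η).2.segment_subset ha' hb' hz
    exact ⟨H1 z h1 (by rw [lt_abs]; left; linarith), h1⟩
  have cross : ∀ a b : Fin N → ℂ, a ∈ Metric.ball c r → b ∈ Metric.ball c r →
      (wf i ζ g a).re < -η → η < (wf i ζ g b).re → JoinedIn (X ∩ Metric.ball c (10 * r)) a b := by
    intro a b ha hb ha' hb'
    obtain ⟨hRa1, hRa2⟩ := hR a (hsub ha)
    obtain ⟨l, hl, hla⟩ := hL (a i') hRa1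
    set Y := (wf i ζ g a).im with hY
    have hYR : |Y| ≤ R := (Complex.abs_im_le_norm _).trans hRa2
    obtain ⟨H, hHc, hH0, hH1, hHl, hHX⟩ := H3 l hl Y hYR
    have hre : -(2 * r) < (wf i ζ g a).re := by
      have h1 : ‖wf i ζ g b - wf i ζ g a‖ < 2 * r := by
        have : wf i ζ g b - wf i ζ g a = ζ * (b i - a i) := by unfold wf; ring
        rw [this, norm_mul, hζ, one_mul, ← dist_eq_norm]
        rw [Metric.mem_ball] at ha hb
        linarith [dist_le_pi_dist b a i, dist_triangle_right b a c]
      have h2 := (Complex.re_le_norm (wf i ζ g b - wf i ζ g a)).trans_lt h1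
      simp only [Complex.sub_re] at h2
      linarith
    have hwa : ∀ u : ℝ, (u + Y * Complex.I : ℂ) - wf i ζ g a = ((u - (wf i ζ g a).re : ℝ) : ℂ) := by
      intro u
      apply Complex.ext <;> simp [hY]
    have hin : ∀ u : ℝ, u ∈ Icc (-(2 * η)) (2 * η) → ∀ v : ℂ, ‖v - l‖ < r →
        mkp i i' ζ g a (u + Y * Complex.I) v ∈ Metric.ball c (10 * r) := by
      intro u hu v hv
      rw [Metric.mem_ball] at ha ⊢
      have h1 : dist (mkp i i' ζ g a (u + Y * Complex.I) v) a < 5 * r := by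
        refine dist_mkp i i' hζ g a _ _ (by positivity) ?_ ?_
        · rw [hwa, Complex.norm_real, Real.norm_eq_abs, abs_lt]
          constructor <;> linarith [hu.1, hu.2]
        · calc ‖v - a i'‖ = ‖(v - l) + (l - a i')‖ := by congr 1; ring
            _ ≤ ‖v - l‖ + ‖l - a i'‖ := norm_add_le _ _
            _ < 5 * r := by linarith
      linarith [dist_triangle (mkp i i' ζ g a (u + Y * Complex.I) v) a c]
    have hll : ‖l - l‖ < r := by simpa using hr
    have hwre : ∀ (u : ℝ) (v : ℂ), (wf i ζ g (mkp i i' ζ g a (u + Y * Complex.I) v)).re = u := by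
      intro u v; rw [wf_mkp hi hζ0]; simp
    have hmin := hin (-(2 * η)) ⟨le_rfl, by linarith⟩ l hll
    have hmax := hin (2 * η) ⟨by linarith, le_rfl⟩ l hll
    have j1 := segL a _ (hsub ha) hmin ha' (by rw [hwre]; linarith)
    have j2 := join_u i i' ζ g a (Y := X ∩ Metric.ball c (10 * r)) (u₀ := -(2 * η)) (u₁ := -η')
      (by linarith) Y (H := fun _ => l) continuousOn_const (by
        intro u hu
        have hm := hin u ⟨hu.1, by linarith [hu.2]⟩ l hll
        refine ⟨H2 _ hm ?_ ?_ (by rw [mkp_apply]; exact hl), hm⟩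
        · rw [hwre, abs_of_neg (by linarith [hu.2])]; linarith [hu.2]
        · rw [hwre, abs_of_neg (by linarith [hu.2])]; linarith [hu.1])
    have j3 := join_u i i' ζ g a (Y := X ∩ Metric.ball c (10 * r)) (u₀ := -η') (u₁ := η')
      (by linarith) Y (H := H) hHc (by
        intro u hu
        have hm := hin u ⟨by linarith [hu.1], by linarith [hu.2]⟩ (H u) (hHl u hu)
        exact ⟨hHX _ hm u hu (wf_mkp hi hζ0 _ _ _ _) (mkp_apply _ _ _ _ _ _ _), hm⟩)
    have j4 := join_u i i' ζ g a (Y := X ∩ Metric.ball c (10 * r)) (u₀ := η') (u₁ := 2 * η)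
      (by linarith) Y (H := fun _ => l) continuousOn_const (by
        intro u hu
        have hm := hin u ⟨by linarith [hu.1], hu.2⟩ l hll
        refine ⟨H2 _ hm ?_ ?_ (by rw [mkp_apply]; exact hl), hm⟩
        · rw [hwre, abs_of_pos (by linarith [hu.1])]; linarith [hu.1]
        · rw [hwre, abs_of_pos (by linarith [hu.1])]; linarith [hu.2])
    have j5 := segR _ b hmax (hsub hb) (by rw [hwre]; linarith) hb'
    rw [hH0, hH1] at j3
    exact (((j1.trans j2).trans j3).trans j4).trans j5
  rcases lt_abs.mp hx' with h1 | h1 <;> rcases lt_abs.mp hy' with h2 | h2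
  · exact segR x y (hsub hx) (hsub hy) h1 h2
  · exact (cross y x hy hx (by linarith) h1).symm
  · exact cross x y hx hy (by linarith) h2
  · exact segL x y (hsub hx) (hsub hy) (by linarith) (by linarith)

theorem poly_bdd (T : Polynomial ℂ) (R : ℝ) : ∃ B : ℝ, 0 ≤ B ∧ ∀ w : ℂ, ‖w‖ ≤ R → ‖T.eval w‖ ≤ B := by
  obtain ⟨B, hB⟩ := (isCompact_closedBall (0 : ℂ) R).exists_bound_of_continuousOn
    (f := fun w => T.eval w) T.continuous.continuousOn
  exact ⟨max B 0, le_max_right _ _, fun w hw => (hB w (by simpa using hw)).trans (le_max_left _ _)⟩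

theorem key_poly {R r η e : ℝ} (hr : 0 < r) (hη : 0 < η) (he : 0 < e) (L : Finset ℂ) :
    ∃ η' : ℝ, 0 < η' ∧ η' < η ∧ ∃ (T q S : Polynomial ℂ) (k : ℕ),
      (∀ w v : ℂ, ‖w‖ ≤ R → ‖v‖ ≤ R → (η ≤ |w.re| ∨ (v ∈ L ∧ η' ≤ |w.re|)) →
        (w.re < 0 → ‖T.eval w + q.eval w ^ k * S.eval v‖ < e) ∧
        (0 < w.re → ‖T.eval w + q.eval w ^ k * S.eval v - 1‖ < e)) ∧
      ∀ l ∈ L, ∀ y : ℝ, |y| ≤ R → ∃ H : ℝ → ℂ, ContinuousOn H (Icc (-η') η') ∧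
        H (-η') = l ∧ H η' = l ∧ (∀ u ∈ Icc (-η') η', ‖H u - l‖ < r) ∧
        ∀ u ∈ Icc (-η') η', ∃ s ∈ Icc (0 : ℝ) 1,
          ‖T.eval (u + y * Complex.I : ℂ) + q.eval (u + y * Complex.I : ℂ) ^ k * S.eval (H u) - s‖ < e := by
  obtain ⟨η', hη', hηη, T, q, hTq⟩ := poly_pair (R := R + η) hη (half_pos he)
  set S : Polynomial ℂ := ∏ l ∈ L, (Polynomial.X - Polynomial.C l) with hS
  have hS0 : ∀ l ∈ L, S.eval l = 0 := by
    intro l hl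
    rw [hS, Polynomial.eval_prod]
    exact Finset.prod_eq_zero hl (by simp)
  have hsep : S.Separable := Polynomial.separable_prod_X_sub_C_iff'.mpr (fun x _ y _ h => h)
  have hS1 : ∀ l ∈ L, S.derivative.eval l ≠ 0 := by
    intro l hl
    have := hsep.eval₂_derivative_ne_zero (RingHom.id ℂ) (x := l) (by
      rw [Polynomial.eval₂_id]; exact hS0 l hl)
    rwa [Polynomial.eval₂_id] at this
  obtain ⟨BS, hBS0, hBS⟩ := poly_bdd S R
  obtain ⟨BT, hBT0, hBT⟩ := poly_bdd T (R + η)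
  have hloc : ∀ l : ℂ, ∃ rl > 0, l ∈ L → ∃ G : ℂ → ℂ, ContinuousOn G (Metric.ball 0 rl) ∧ G 0 = l ∧
      ∀ ν ∈ Metric.ball (0 : ℂ) rl, S.eval (G ν) = ν ∧ ‖G ν - l‖ < r := by
    intro l
    by_cases hl : l ∈ L
    · obtain ⟨rl, h, G, hG⟩ := local_inv S (hS0 l hl) (hS1 l hl) hr
      exact ⟨rl, h, fun _ => ⟨G, hG⟩⟩
    · exact ⟨1, one_pos, fun h => absurd h hl⟩
  choose rl hrl hG using hloc
  have ev1 : ∀ᶠ k : ℕ in Filter.atTop, (1 / 2 : ℝ) ^ k * BS < e / 2 := by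
    have := (tendsto_pow_atTop_nhds_zero_of_lt_one (r := (1 / 2 : ℝ)) (by norm_num)
      (by norm_num)).mul_const BS
    rw [zero_mul] at this
    exact this.eventually_lt_const (half_pos he)
  have ev2 : ∀ᶠ k : ℕ in Filter.atTop, ∀ l ∈ L, (1 + e / 2 + BT) / rl l < (5 / 4 : ℝ) ^ k := by
    rw [Filter.eventually_all_finset]
    intro l _
    exact (tendsto_pow_atTop_atTop_of_one_lt (by norm_num)).eventually_gt_atTop _
  obtain ⟨k, hk1, hk2⟩ := (ev1.and ev2).exists
  refine ⟨η', hη', hηη, T, q, S, k, ?_, ?_⟩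
  · intro w v hw hv hor
    obtain ⟨h1, h2, h3, h4⟩ := hTq w (by linarith)
    have hx : η' ≤ |w.re| := by
      rcases hor with h | h
      · linarith
      · exact h.2
    have hsm : ‖q.eval w ^ k * S.eval v‖ < e / 2 := by
      rcases hor with h | h
      · rw [norm_mul, norm_pow]
        refine lt_of_le_of_lt ?_ hk1
        have := h3 h
        gcongr
        exact hBS v hv
      · rw [hS0 v h.1]; simpa using he
    constructor
    · intro hneg
      rw [abs_of_neg hneg] at hx
      have := h1 (by linarith)
      linarith [norm_add_le (T.eval w) (q.eval w ^ k * S.eval v)]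
    · intro hpos
      rw [abs_of_pos hpos] at hx
      have := h2 (by linarith)
      have h5 := norm_add_le (T.eval w - 1) (q.eval w ^ k * S.eval v)
      have h6 : T.eval w + q.eval w ^ k * S.eval v - 1 = T.eval w - 1 + q.eval w ^ k * S.eval v := by ring
      rw [h6]; linarith
  · intro l hl y hy
    obtain ⟨G, hGc, hG0, hGG⟩ := hG l hl
    let W : ℝ → ℂ := fun u => u + y * Complex.I
    have hWc : Continuous W := by fun_prop
    have hWre : ∀ u, (W u).re = u := by intro u; simp [W]
    have hWn : ∀ u ∈ Icc (-η') η', ‖W u‖ ≤ R + η := by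
      intro u hu
      have h1 := norm_add_le (u : ℂ) (y * Complex.I)
      have h2 : ‖(u : ℂ)‖ ≤ η := by
        rw [Complex.norm_real, Real.norm_eq_abs, abs_le]; constructor <;> linarith [hu.1, hu.2]
      have h3 : ‖(y : ℂ) * Complex.I‖ ≤ R := by
        rw [norm_mul, Complex.norm_I, mul_one, Complex.norm_real]; exact hy
      change ‖(u : ℂ) + y * Complex.I‖ ≤ R + η
      linarith
    let s : ℝ → ℝ := fun u => (u + η') / (2 * η')
    have hs : ∀ u ∈ Icc (-η') η', s u ∈ Icc (0 : ℝ) 1 := by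
      intro u hu
      constructor
      · exact div_nonneg (by linarith [hu.1]) (by linarith)
      · rw [div_le_one (by linarith)]; linarith [hu.2]
    let ρ : ℝ → ℂ := fun u => (1 - s u) * T.eval (W (-η')) + s u * T.eval (W η')
    have hρ : ∀ u ∈ Icc (-η') η', ‖ρ u - s u‖ ≤ e / 2 := by
      intro u hu
      have hm : -η' ∈ Icc (-η') η' := ⟨le_rfl, by linarith⟩
      have hp : η' ∈ Icc (-η') η' := ⟨by linarith, le_rfl⟩
      have h1 := (hTq _ (hWn _ hm)).1 (hWre _).le
      have h2 := (hTq _ (hWn _ hp)).2.1 (hWre _).ge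
      obtain ⟨ha, hb⟩ := hs u hu
      have h3 : ρ u - s u = ((1 - s u : ℝ) : ℂ) * T.eval (W (-η')) + (s u : ℂ) * (T.eval (W η') - 1) := by
        simp only [ρ]; push_cast; ring
      rw [h3]
      refine (norm_add_le _ _).trans ?_
      rw [norm_mul, norm_mul, Complex.norm_real, Complex.norm_real, Real.norm_eq_abs, Real.norm_eq_abs,
        abs_of_nonneg ha, abs_of_nonneg (by linarith : 0 ≤ 1 - s u)]
      nlinarith
    have hq : ∀ u ∈ Icc (-η') η', (5 / 4 : ℝ) ^ k ≤ ‖q.eval (W u) ^ k‖ := by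
      intro u hu
      have := (hTq _ (hWn u hu)).2.2.2 (by rw [hWre, abs_le]; exact hu)
      rw [norm_pow]; gcongr
    have hq0 : ∀ u ∈ Icc (-η') η', q.eval (W u) ^ k ≠ 0 := by
      intro u hu h
      have := hq u hu
      rw [h, norm_zero] at this
      have h2 : (0 : ℝ) < (5 / 4) ^ k := by positivity
      linarith
    let ν : ℝ → ℂ := fun u => (ρ u - T.eval (W u)) / q.eval (W u) ^ k
    have hν : ∀ u ∈ Icc (-η') η', ν u ∈ Metric.ball (0 : ℂ) (rl l) := by
      intro u hu
      rw [mem_ball_zero_iff, norm_div]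
      have h1 : ‖ρ u - T.eval (W u)‖ ≤ 1 + e / 2 + BT := by
        have h3 : ρ u - T.eval (W u) = (s u : ℂ) + (ρ u - s u) - T.eval (W u) := by ring
        rw [h3]
        refine (norm_sub_le _ _).trans (add_le_add ((norm_add_le _ _).trans (add_le_add ?_ (hρ u hu)))
          (hBT _ (hWn u hu)))
        rw [Complex.norm_real, Real.norm_eq_abs, abs_of_nonneg (hs u hu).1]; exact (hs u hu).2
      have h2 := hk2 l hl
      rw [div_lt_iff₀ (hrl l)] at h2
      have h4 := hq u hu
      have h5 : (0 : ℝ) < (5 / 4) ^ k := by positivity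
      rw [div_lt_iff₀ (by linarith)]
      have : (5 / 4 : ℝ) ^ k * rl l ≤ ‖q.eval (W u) ^ k‖ * rl l :=
        mul_le_mul_of_nonneg_right h4 (hrl l).le
      linarith
    have hsm : s (-η') = 0 := by simp [s]
    have hsp : s η' = 1 := by simp only [s]; field_simp; norm_num
    have hcs : Continuous s := by fun_prop
    refine ⟨fun u => G (ν u), ?_, ?_, ?_, ?_, ?_⟩
    · refine hGc.comp ?_ hν
      refine ContinuousOn.div ?_ ?_ hq0
      · have : Continuous ρ := by fun_prop
        exact (this.sub (T.continuous.comp hWc)).continuousOn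
      · exact ((q.continuous.comp hWc).pow k).continuousOn
    · have : ν (-η') = 0 := by simp [ν, ρ, hsm]
      simp only [this, hG0]
    · have : ν η' = 0 := by simp [ν, ρ, hsp]
      simp only [this, hG0]
    · intro u hu; exact (hGG _ (hν u hu)).2
    · intro u hu
      refine ⟨s u, hs u hu, ?_⟩
      rw [(hGG _ (hν u hu)).1]
      have : T.eval (W u) + q.eval (W u) ^ k * ν u = ρ u := by
        simp only [ν]; rw [mul_div_cancel₀ _ (hq0 u hu)]; ring
      change ‖T.eval (W u) + q.eval (W u) ^ k * ν u - s u‖ < e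
      rw [this]; linarith [hρ u hu]

theorem step_T {N : ℕ} {i i' : Fin N} (hi : i ≠ i') {ζ : ℂ} (hζ : ‖ζ‖ = 1) (g : ℝ) {e : ℝ}
    (he : 0 < e) : Steppable {γ : C(unitInterval, Fin N → ℂ) |
      ∃ F : MvPolynomial (Fin N) ℂ, ∀ t, γ t ∈ OF F i ζ g e} := by
  intro γ hγ δ hδ loss hl
  have hζ0 : ζ ≠ 0 := by rintro rfl; simp at hζ
  set r := δ / 20 with hrdef
  have hr : 0 < r := by positivity
  obtain ⟨R0, hR0⟩ := (isCompact_range γ.continuous).isBounded.subset_ball (0 : Fin N → ℂ)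
  have hR0' : ∀ t, ‖γ t‖ < R0 := fun t => by simpa using hR0 (mem_range_self t)
  set R := R0 + 10 * r + |g| with hRdef
  have hwc := continuous_wf i ζ g
  have hRb : ∀ t, ∀ z ∈ Metric.ball (γ t) (10 * r), ‖z i'‖ ≤ R ∧ ‖wf i ζ g z‖ ≤ R := by
    intro t z hz
    have h1 : ‖z‖ ≤ R0 + 10 * r := by
      rw [Metric.mem_ball, dist_eq_norm] at hz
      have := norm_add_le (z - γ t) (γ t)
      rw [sub_add_cancel] at this
      linarith [hR0' t]
    constructor
    · have := norm_le_pi_norm z i'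
      linarith [abs_nonneg g]
    · unfold wf
      have h2 := norm_sub_le (ζ * z i) (g : ℂ)
      rw [norm_mul, hζ, one_mul, Complex.norm_real, Real.norm_eq_abs] at h2
      linarith [norm_le_pi_norm z i]
  obtain ⟨η₀, hη₀, hηl⟩ := small_nbhd (f := fun z : Fin N → ℂ => |(wf i ζ g z).re|)
    (Complex.continuous_re.comp hwc).abs (isCompact_range γ.continuous) (ENNReal.half_pos hl).ne'
  set η := min η₀ (min (r / 8) (e / 2)) with hηdef
  have hη : 0 < η := by positivity
  have hη1 : η ≤ η₀ := min_le_left _ _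
  have hη2 : η ≤ r / 8 := (min_le_right _ _).trans (min_le_left _ _)
  have hη3 : η ≤ e / 2 := (min_le_right _ _).trans (min_le_right _ _)
  obtain ⟨L, hL⟩ := disc_net R hr
  obtain ⟨η', hη', hηη, T, q, S, k, hA, hB⟩ := key_poly (R := R) hr hη he L
  let P : MvPolynomial (Fin N) ℂ := C ζ * X i - C (g : ℂ)
  have hP : ∀ z, eval z P = wf i ζ g z := by intro z; simp [P, wf]
  let F : MvPolynomial (Fin N) ℂ := Polynomial.aeval P T + (Polynomial.aeval P q) ^ k *
    Polynomial.aeval (X i' : MvPolynomial (Fin N) ℂ) S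
  have hF : ∀ z, eval z F = T.eval (wf i ζ g z) + q.eval (wf i ζ g z) ^ k * S.eval (z i') := by
    intro z
    simp only [F, map_add, map_mul, map_pow, eval_aeval_poly, hP, eval_X]
  have hin : ∀ t, ∀ z ∈ Metric.ball (γ t) (10 * r),
      (η ≤ |(wf i ζ g z).re| ∨ (z i' ∈ L ∧ η' ≤ |(wf i ζ g z).re|)) → z ∈ OF F i ζ g e := by
    intro t z hz hor
    obtain ⟨h1, h2⟩ := hA _ _ (hRb t z hz).2 (hRb t z hz).1 hor
    have h3 : (wf i ζ g z).re ≠ 0 := by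
      intro h
      rw [h, abs_zero] at hor
      rcases hor with h | h
      · linarith
      · linarith [h.2]
    rw [← hF] at h1 h2
    rcases lt_or_gt_of_ne h3 with h | h
    · exact ⟨Or.inr (h1 h), Or.inl (by linarith), 0, by simp, by simpa using h1 h⟩
    · exact ⟨Or.inl (by linarith), Or.inr (h2 h), 1, by simp, by simpa using h2 h⟩
  let D : Set (Fin N → ℂ) := {z | η < |(wf i ζ g z).re|} ∩ ⋃ t, Metric.ball (γ t) (10 * r)
  have hDo : IsOpen D := (isOpen_lt continuous_const (Complex.continuous_re.comp hwc).abs).inter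
    (isOpen_iUnion fun t => Metric.isOpen_ball)
  have hDX : D ⊆ OF F i ζ g e := by
    rintro z ⟨h1, h2⟩
    obtain ⟨t, ht⟩ := mem_iUnion.mp h2
    exact hin t z ht (Or.inl (le_of_lt h1))
  have hmeet : ∀ t, (D ∩ Metric.ball (γ t) (r / 2)).Nonempty := by
    intro t
    set w := wf i ζ g (γ t) with hw
    have key : ∃ a : ℂ, ‖a - w‖ < r / 2 ∧ η < |a.re| := by
      rcases le_total 0 w.re with h | h
      · refine ⟨w + (2 * η : ℝ), ?_, ?_⟩
        · rw [add_sub_cancel_left, Complex.norm_real, Real.norm_eq_abs, abs_of_pos (by linarith)]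
          linarith
        · rw [Complex.add_re, Complex.ofReal_re, abs_of_pos (by linarith)]; linarith
      · refine ⟨w - (2 * η : ℝ), ?_, ?_⟩
        · rw [sub_sub_cancel_left, norm_neg, Complex.norm_real, Real.norm_eq_abs, abs_of_pos (by linarith)]
          linarith
        · rw [Complex.sub_re, Complex.ofReal_re, abs_of_neg (by linarith)]; linarith
    obtain ⟨a, ha1, ha2⟩ := key
    have hd := dist_mkp i i' hζ g (γ t) a (γ t i') (half_pos hr) ha1 (by simpa using hr)
    refine ⟨_, ⟨?_, mem_iUnion.mpr ⟨t, ?_⟩⟩, hd⟩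
    · change η < |(wf i ζ g _).re|
      rw [wf_mkp hi hζ0]; exact ha2
    · rw [Metric.mem_ball]; linarith
  have hjoin : ∀ t, ∀ x ∈ D ∩ Metric.ball (γ t) r, ∀ y ∈ D ∩ Metric.ball (γ t) r,
      JoinedIn (OF F i ζ g e ∩ Metric.ball (γ t) (10 * r)) x y := by
    intro t x hx y hy
    refine join_T hi hζ g hη hη' hηη (by linarith) L (hRb t) hL ?_ ?_ ?_ hx.2 hy.2 hx.1.1 hy.1.1
    · intro z hz h; exact hin t z hz (Or.inl h.le)
    · intro z hz h _ h2; exact hin t z hz (Or.inr ⟨h2, h⟩)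
    · intro l hl' y hy
      obtain ⟨H, h1, h2, h3, h4, h5⟩ := hB l hl' y hy
      refine ⟨H, h1, h2, h3, h4, ?_⟩
      intro z hz u hu hw hv
      obtain ⟨s, hs, hs'⟩ := h5 u hu
      have hre : (wf i ζ g z).re = u := by rw [hw]; simp
      refine ⟨Or.inl ?_, Or.inl ?_, s, hs, ?_⟩
      · rw [hre]; linarith [hu.1]
      · rw [hre]; linarith [hu.2]
      · rw [hF, hw, hv]; exact hs'
  obtain ⟨γ', h0, h1, h2, h3⟩ := template γ hγ hDo hDX hr (by linarith : r ≤ 10 * r) hmeet hjoin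
    (ENNReal.half_pos hl).ne'
  refine ⟨γ', h0, fun t => by have := h2 t; rw [hrdef] at this; linarith, ⟨F, h1⟩, ?_⟩
  have hnull := null_hyper i hζ0 g
  have h4 : volume (({z : Fin N → ℂ | (ζ * z i).re = g} ∪
      (range γ ∩ {z | 0 < |(wf i ζ g z).re| ∧ |(wf i ζ g z).re| ≤ η₀})) ∪
      (((⋃ t, Metric.ball (γ t) (r / 2)) ∩ D) \ range γ')) ≤ loss := by
    refine (measure_union_le _ _).trans ((add_le_add (measure_union_le _ _) h3).trans ?_)
    rw [hnull, zero_add]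
    exact (add_le_add hηl le_rfl).trans (ENNReal.add_halves loss).le
  refine (measure_mono ?_).trans h4
  rintro y ⟨⟨t, rfl⟩, hy⟩
  by_cases h : η < |(wf i ζ g (γ t)).re|
  · refine Or.inr ⟨⟨mem_iUnion.mpr ⟨t, Metric.mem_ball_self (by positivity)⟩, h, 
      mem_iUnion.mpr ⟨t, Metric.mem_ball_self (by positivity)⟩⟩, hy⟩
  · left
    push Not at h
    by_cases h5 : (wf i ζ g (γ t)).re = 0
    · left
      change (ζ * γ t i).re = g
      rw [wf, Complex.sub_re, Complex.ofReal_re] at h5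
      linarith
    · exact Or.inr ⟨⟨t, rfl⟩, abs_pos.mpr h5, h.trans hη1⟩

/-- moving inside the grid complement of `A` -/
theorem join_grid {N : ℕ} {i₀ i₁ : Fin N} (hi : i₀ ≠ i₁) {A : Set (Fin N → ℂ)} {L : Finset ℂ}
    (hA : ∀ z ∈ A, z i₀ ∉ L ∧ z i₁ ∉ L) {c : Fin N → ℂ} {s : ℝ} (hs : 0 < s)
    (hL : ∃ l ∈ L, ‖l - c i₀‖ < s)
    {x y : Fin N → ℂ} (hx : x ∈ Metric.ball c s) (hy : y ∈ Metric.ball c s)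
    (hx1 : x i₁ ∈ L) (hy1 : y i₁ ∈ L) : JoinedIn (Aᶜ ∩ Metric.ball c s) x y := by
  obtain ⟨l, hl, hlc⟩ := hL
  have hcb : Convex ℝ (Metric.ball c s) := convex_ball _ _
  have seg : ∀ (i : Fin N), (i = i₀ ∨ i = i₁) → ∀ a b : Fin N → ℂ, a ∈ Metric.ball c s →
      b ∈ Metric.ball c s → a i ∈ L → b i = a i → JoinedIn (Aᶜ ∩ Metric.ball c s) a b := by
    intro i hii a b ha hb haL hab
    refine JoinedIn.of_segment_subset fun z hz => ⟨fun hzA => ?_, hcb.segment_subset ha hb hz⟩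
    obtain ⟨u, v, hu, hv, huv, rfl⟩ := hz
    have h1 : (u • a + v • b) i = a i := by
      simp only [Pi.add_apply, Pi.smul_apply, hab, ← add_smul, huv, one_smul]
    have := hA _ hzA
    rcases hii with rfl | rfl
    · exact this.1 (by rw [h1]; exact haL)
    · exact this.2 (by rw [h1]; exact haL)
  have upd : ∀ a ∈ Metric.ball c s, Function.update a i₀ l ∈ Metric.ball c s := by
    intro a ha
    rw [Metric.mem_ball, dist_pi_lt_iff hs] at ha ⊢
    intro k
    by_cases h : k = i₀
    · subst h; rw [Function.update_self, dist_eq_norm]; exact hlc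
    · rw [Function.update_of_ne h]; exact ha k
  have j1 := seg i₁ (Or.inr rfl) x (Function.update x i₀ l) hx (upd x hx) hx1
    (Function.update_of_ne hi.symm _ _)
  have j2 := seg i₀ (Or.inl rfl) (Function.update x i₀ l) (Function.update y i₀ l) (upd x hx) (upd y hy)
    (by simpa using hl) (by simp)
  have j3 := seg i₁ (Or.inr rfl) y (Function.update y i₀ l) hy (upd y hy) hy1
    (Function.update_of_ne hi.symm _ _)
  exact (j1.trans j2).trans j3.symm

theorem upd_near {N : ℕ} (i : Fin N) (x : Fin N → ℂ) {l : ℂ} {s : ℝ} (hs : 0 < s)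
    (h : ‖l - x i‖ < s) : dist (Function.update x i l) x < s := by
  rw [dist_pi_lt_iff hs]
  intro k
  by_cases hk : k = i
  · subst hk; rw [Function.update_self, dist_eq_norm]; exact h
  · rw [Function.update_of_ne hk]; simpa using hs

theorem null_coord {N : ℕ} (i : Fin N) (l : ℂ) : volume {z : Fin N → ℂ | z i = l} = 0 := by
  refine measure_mono_null ?_ (null_hyper i (one_ne_zero (α := ℂ)) l.re)
  intro z (hz : z i = l)
  change (1 * z i).re = l.re
  rw [one_mul, hz]

theorem step_inj {N : ℕ} {i₀ i₁ : Fin N} (hi : i₀ ≠ i₁) {b a' b' : ℝ} (hb0 : 0 ≤ b)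
    (hba : b < a') (hb1 : b' < 1) :
    Steppable {γ : C(unitInterval, Fin N → ℂ) | ∀ s t : unitInterval, (s : ℝ) ≤ b →
      a' ≤ t → (t : ℝ) ≤ b' → γ s ≠ γ t} := by
  intro γ hγ δ hδ loss hl
  by_cases hab' : a' ≤ b'
  swap
  · refine ⟨γ, hγ, fun t => by simpa using hδ, fun s t _ h1 h2 => absurd (h1.trans h2) hab', by simp⟩
  -- the first part of the curve
  set m := (b + a') / 2 with hm
  let K : Set (Fin N → ℂ) := γ '' {t : unitInterval | (t : ℝ) ≤ m}
  have hKc : IsCompact K := (IsClosed.isCompact (isClosed_le continuous_subtype_val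
    continuous_const)).image γ.continuous
  have hKne : K.Nonempty := ⟨γ 0, 0, by change ((0 : unitInterval) : ℝ) ≤ m; simp; linarith, rfl⟩
  obtain ⟨δ₁, hδ₁, hδl⟩ := small_nbhd (f := fun z : Fin N → ℂ => Metric.infDist z K)
    (Metric.continuous_infDist_pt K) (isCompact_range γ.continuous) (ENNReal.half_pos hl).ne'
  set s := min (δ₁ / 4) (δ / 20) with hsdef
  have hs : 0 < s := by positivity
  have hs1 : 4 * s ≤ δ₁ := by have := min_le_left (δ₁ / 4) (δ / 20); linarith
  have hs2 : 20 * s ≤ δ := by have := min_le_right (δ₁ / 4) (δ / 20); linarith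
  obtain ⟨R0, hR0⟩ := (isCompact_range γ.continuous).isBounded.subset_ball (0 : Fin N → ℂ)
  have hR0' : ∀ t, ‖γ t‖ < R0 := fun t => by simpa using hR0 (mem_range_self t)
  set R := R0 + 10 * s with hRdef
  obtain ⟨L, hL⟩ := disc_net R hs
  -- the null set
  let P : MvPolynomial (Fin N) ℂ := (∏ l ∈ L, (X i₀ - C l)) * ∏ l ∈ L, (X i₁ - C l)
  have hP : ∀ z, eval z P ≠ 0 ↔ z i₀ ∉ L ∧ z i₁ ∉ L := by
    intro z
    simp only [P, map_mul, eval_prod, map_sub, eval_X, eval_C, ne_eq, mul_eq_zero,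
      Finset.prod_eq_zero_iff, sub_eq_zero, not_or, exists_eq_right']
  let W : Set (Fin N → ℂ) := {z | eval z P ≠ 0}
  have hWo : IsOpen W := isOpen_ne_fun (MvPolynomial.continuous_eval P) continuous_const
  have hWn : volume Wᶜ = 0 := by
    have hsub : Wᶜ ⊆ (⋃ l ∈ L, {z : Fin N → ℂ | z i₀ = l}) ∪ ⋃ l ∈ L, {z : Fin N → ℂ | z i₁ = l} := by
      intro z hz
      have hz' : ¬ (z i₀ ∉ L ∧ z i₁ ∉ L) := fun h => hz ((hP z).mpr h)
      by_cases h0 : z i₀ ∈ L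
      · exact Or.inl (mem_biUnion h0 rfl)
      · have h1 : z i₁ ∈ L := by by_contra h; exact hz' ⟨h0, h⟩
        exact Or.inr (mem_biUnion h1 rfl)
    refine measure_mono_null hsub (measure_union_null ?_ ?_)
    · exact (measure_biUnion_null_iff L.countable_toSet).mpr fun l _ => null_coord i₀ l
    · exact (measure_biUnion_null_iff L.countable_toSet).mpr fun l _ => null_coord i₁ l
  -- the partition
  obtain ⟨M₀, hM₀⟩ := exists_partition γ hs
  obtain ⟨M₁, hM₁⟩ := exists_nat_gt (max (6 / (a' - b)) (1 / (1 - b')))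
  set M := M₀ + M₁ + 1 with hMdef
  have hM : 0 < M := by omega
  have hM' : (0 : ℝ) < M := by exact_mod_cast hM
  have hpart := hM₀ M (by omega) hM
  have hMM : (M₁ : ℝ) ≤ M := by exact_mod_cast (by omega : M₁ ≤ M)
  set x := 1 / (M : ℝ) with hxdef
  have hx0 : 0 < x := by positivity
  have hx1 : 6 * x < a' - b := by
    have h1 : 6 / (a' - b) < M := (le_max_left _ _).trans_lt (hM₁.trans_le hMM)
    rw [div_lt_iff₀ (by linarith)] at h1
    rw [hxdef, mul_one_div, div_lt_iff₀ hM']; linarith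
  have hx2 : x < 1 - b' := by
    have h1 : 1 / (1 - b') < M := (le_max_right _ _).trans_lt (hM₁.trans_le hMM)
    rw [div_lt_iff₀ (by linarith)] at h1
    rw [hxdef, div_lt_iff₀ hM']; linarith
  let T1 : ℕ → Prop := fun j => (j : ℝ) / M ≤ b
  let T2 : ℕ → Prop := fun j => a' ≤ (j : ℝ) / M + x ∧ (j : ℝ) / M ≤ b'
  have hsucc : ∀ j : ℕ, ((j : ℝ) + 1) / M = (j : ℝ) / M + x := fun j => add_div _ _ _
  have hcast : ∀ j : ℕ, ((j + 1 : ℕ) : ℝ) / M = (j : ℝ) / M + x := fun j => by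
    rw [← hsucc]; push_cast; rfl
  let Q : ℕ → Prop := fun j => T2 j ∨ ∃ k, j = k + 1 ∧ T2 k
  let c : ℕ → (Fin N → ℂ) := fun j => γ (ptI M j)
  have hcR : ∀ j, ‖c j‖ < R0 := fun j => hR0' _
  have hpick0 : ∀ p : Fin N → ℂ, ∃ z ∈ Metric.ball p s, z ∈ W := by
    intro p
    by_contra hcon
    push Not at hcon
    have : Metric.ball p s ⊆ Wᶜ := fun z hz => hcon z hz
    exact (Metric.measure_ball_pos volume p hs).ne' (measure_mono_null this hWn)
  have hpick1 : ∀ p : Fin N → ℂ, ∃ z, ‖p‖ ≤ R → z ∈ Metric.ball p s ∧ z i₁ ∈ L := by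
    intro p
    by_cases hp : ‖p‖ ≤ R
    · obtain ⟨l, hlL, hlp⟩ := hL (p i₁) ((norm_le_pi_norm p i₁).trans hp)
      exact ⟨Function.update p i₁ l, fun _ => ⟨upd_near i₁ p hs hlp, by simpa using hlL⟩⟩
    · exact ⟨p, fun h => absurd h hp⟩
  choose p0 hp0 hp0W using hpick0
  choose p1 hp1 using hpick1
  classical
  let d : ℕ → (Fin N → ℂ) := fun j => if Q j then p1 (c j) else p0 (c j)
  have hdc : ∀ j, dist (d j) (c j) < s := by
    intro j
    simp only [d]
    split_ifs
    · exact (hp1 (c j) (by have := hcR j; linarith)).1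
    · exact hp0 (c j)
  have hdL : ∀ j, Q j → d j i₁ ∈ L := by
    intro j hj
    simp only [d, if_pos hj]
    exact (hp1 (c j) (by have := hcR j; linarith)).2
  have hdW : ∀ j, ¬ Q j → d j ∈ W := by
    intro j hj
    simp only [d, if_neg hj]
    exact hp0W _
  have hc1 : ∀ j < M, dist (c (j + 1)) (c j) < s := by
    intro j hj
    apply hpart
    rw [ptI_val M (j + 1) hM (by omega), ptI_val M j hM (by omega), hcast, add_sub_cancel_left,
      abs_of_pos hx0]
  have hd1 : ∀ j < M, dist (d (j + 1)) (c j) < 2 * s := by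
    intro j hj
    linarith [dist_triangle (d (j + 1)) (c (j + 1)) (c j), hdc (j + 1), hc1 j hj]
  have hMdiv : (M : ℝ) / M = 1 := div_self hM'.ne'
  have hQ0 : ¬ Q 0 := by
    rintro (h | ⟨k, hk, -⟩)
    · have := h.1
      simp only [Nat.cast_zero, zero_div] at this
      linarith
    · omega
  have hQM : ¬ Q M := by
    rintro (h | ⟨k, hk, h⟩)
    · have := h.2
      rw [hMdiv] at this; linarith
    · have h1 := h.2
      have h2 := hcast k
      rw [← hk, hMdiv] at h2
      linarith
  have hdM : d M = d 0 := by
    have : c M = c 0 := by simp only [c, ptI_zero, ptI_self M hM, hγ]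
    simp only [d, if_neg hQ0, if_neg hQM, this]
  -- open sets to be covered
  let B : ℕ → Set (Fin N → ℂ) := fun j => Metric.ball (c j) (3 * s)
  let O : ℕ → Set (Fin N → ℂ) := fun j => if T1 j then W ∩ B j else
    if T2 j then {z | 4 * s < Metric.infDist z K} ∩ B j else B j
  have hfar : IsOpen {z : Fin N → ℂ | 4 * s < Metric.infDist z K} :=
    isOpen_lt continuous_const (Metric.continuous_infDist_pt K)
  have hOB : ∀ j, O j ⊆ B j := by
    intro j
    simp only [O]
    split_ifs
    · exact inter_subset_right
    · exact inter_subset_right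
    · exact subset_rfl
  have hOo : ∀ j, IsOpen (O j) := by
    intro j
    simp only [O]
    split_ifs
    · exact hWo.inter Metric.isOpen_ball
    · exact hfar.inter Metric.isOpen_ball
    · exact Metric.isOpen_ball
  obtain ⟨κ, hκc, hκO, hκl⟩ := exists_compacts (volume : Measure (Fin N → ℂ)) O hOo
    (fun j => ((measure_mono (hOB j)).trans_lt Metric.isBounded_ball.measure_lt_top).ne) M
    (ENNReal.half_pos hl).ne'
  have hT12 : ∀ j, T1 j → ¬ Q j ∧ ¬ Q (j + 1) := by
    intro j (hj : (j : ℝ) / M ≤ b)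
    constructor
    · rintro (h | ⟨k, rfl, h⟩)
      · linarith [h.1]
      · have := h.1
        rw [hcast] at hj; linarith
    · rintro (h | ⟨k, hk, h⟩)
      · have := h.1
        rw [hcast] at this; linarith
      · have : j = k := by omega
        subst this
        linarith [h.1]
  have hdB : ∀ j, d j ∈ B j := fun j => by
    change dist (d j) (c j) < 3 * s
    linarith [hdc j]
  have hdB1 : ∀ j < M, d (j + 1) ∈ B j := fun j hj => by
    change dist (d (j + 1)) (c j) < 3 * s
    linarith [hd1 j hj]
  -- first pass: type 1 pieces
  have cov1 : ∀ j, j < M → T1 j → Cov (W ∩ B j) (κ j) (d j) (d (j + 1)) := by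
    intro j hj h1
    have hO1 : O j = W ∩ B j := by simp only [O, if_pos h1]
    refine cov_compact (D := W ∩ B j) (D' := W ∩ B j) (hWo.inter Metric.isOpen_ball) subset_rfl
      subset_rfl (fun y hy z hz => ?_) (hκc j) (hO1 ▸ hκO j) ⟨hdW _ (hT12 j h1).1, hdB j⟩
      ⟨hdW _ (hT12 j h1).2, hdB1 j hj⟩
    exact join_poly P Metric.isOpen_ball (convex_ball _ _) hy.2 hz.2 hy.1 hz.1
  have cov1' : ∀ j, ∃ A : Set (Fin N → ℂ), j < M → T1 j → A ⊆ W ∩ B j ∧ 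
      Cov A (κ j) (d j) (d (j + 1)) := by
    intro j
    by_cases h : j < M ∧ T1 j
    · obtain ⟨p, hp, hpk⟩ := cov1 j h.1 h.2
      refine ⟨range p, fun _ _ => ⟨?_, p, fun t => mem_range_self t, hpk⟩⟩
      rintro _ ⟨t, rfl⟩; exact hp t
    · exact ⟨∅, fun h1 h2 => absurd ⟨h1, h2⟩ h⟩
  choose A hA using cov1'
  let AA : Set (Fin N → ℂ) := ⋃ j ∈ {j | j < M ∧ T1 j}, A j
  have hAAW : ∀ z ∈ AA, z i₀ ∉ L ∧ z i₁ ∉ L := by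
    intro z hz
    obtain ⟨j, hj, hz⟩ := mem_iUnion₂.mp hz
    exact (hP z).mp ((hA j hj.1 hj.2).1 hz).1
  have hAAK : ∀ z ∈ AA, Metric.infDist z K < 3 * s := by
    intro z hz
    obtain ⟨j, hj, hz⟩ := mem_iUnion₂.mp hz
    have h1 := ((hA j hj.1 hj.2).1 hz).2
    have h2 : c j ∈ K := by
      refine ⟨ptI M j, ?_, rfl⟩
      change ((ptI M j : unitInterval) : ℝ) ≤ m
      rw [ptI_val M j hM hj.1.le]
      have : (j : ℝ) / M ≤ b := hj.2
      linarith
    exact (Metric.infDist_le_dist_of_mem h2).trans_lt h1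
  -- second pass
  have cov2 : ∀ j, j < M → T2 j →
      Cov (AAᶜ ∩ Metric.ball (c j) (10 * s)) (κ j) (d j) (d (j + 1)) := by
    intro j hj h2
    have hn1 : ¬ T1 j := fun h => (hT12 j h).1 (Or.inl h2)
    have hO2 : O j = {z | 4 * s < Metric.infDist z K} ∩ B j := by
      simp only [O, if_neg hn1, if_pos h2]
    have hBs : B j ⊆ Metric.ball (c j) (10 * s) := Metric.ball_subset_ball (by linarith)
    have hcjR := hcR j
    have hgrid : ∀ y z, y ∈ Metric.ball (c j) (10 * s) → z ∈ Metric.ball (c j) (10 * s) →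
        y i₁ ∈ L → z i₁ ∈ L → JoinedIn (AAᶜ ∩ Metric.ball (c j) (10 * s)) y z := by
      intro y z hy hz hy1 hz1
      obtain ⟨l, hlL, hll⟩ := hL (c j i₀) ((norm_le_pi_norm _ _).trans (by linarith))
      exact join_grid hi hAAW (by linarith) ⟨l, hlL, by linarith⟩ hy hz hy1 hz1
    have hto : ∀ y ∈ O j ∪ {z | z ∈ B j ∧ z i₁ ∈ L}, ∃ z, z ∈ Metric.ball (c j) (10 * s) ∧ z i₁ ∈ L ∧
        JoinedIn (AAᶜ ∩ Metric.ball (c j) (10 * s)) y z := by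
      rintro y (hy | ⟨hy, hy1⟩)
      · rw [hO2] at hy
        have hyB : dist y (c j) < 3 * s := hy.2
        have hyn : ‖y‖ ≤ R := by
          rw [dist_eq_norm] at hyB
          have := norm_add_le (y - c j) (c j)
          rw [sub_add_cancel] at this
          linarith
        obtain ⟨l, hlL, hll⟩ := hL (y i₁) ((norm_le_pi_norm _ _).trans hyn)
        have hdu := upd_near i₁ y hs hll
        have hball : Metric.ball y s ⊆ AAᶜ ∩ Metric.ball (c j) (10 * s) := by
          intro z hz
          rw [Metric.mem_ball] at hz
          constructor
          · intro hzA
            have h3 := hAAK z hzA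
            have h4 := Metric.infDist_le_infDist_add_dist (s := K) (x := y) (y := z)
            rw [dist_comm] at h4
            have h5 : 4 * s < Metric.infDist y K := hy.1
            linarith
          · rw [Metric.mem_ball]; linarith [dist_triangle z y (c j)]
        refine ⟨Function.update y i₁ l, (hball hdu).2, by simpa using hlL, ?_⟩
        exact JoinedIn.of_segment_subset fun z hz => hball
          ((convex_ball y s).segment_subset (Metric.mem_ball_self hs) hdu hz)
      · have hyb := hBs hy
        exact ⟨y, hyb, hy1, hgrid y y hyb hyb hy1 hy1⟩
    have hQj : Q j := Or.inl h2
    have hQj1 : Q (j + 1) := Or.inr ⟨j, rfl, h2⟩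
    refine cov_compact (D := O j) (D' := O j ∪ {z | z ∈ B j ∧ z i₁ ∈ L}) (hOo j) ?_ subset_union_left
      (fun y hy z hz => ?_) (hκc j) (hκO j) (Or.inr ⟨hdB j, hdL j hQj⟩)
      (Or.inr ⟨hdB1 j hj, hdL _ hQj1⟩)
    · intro z hz
      refine ⟨fun hzA => ?_, hBs (hOB j hz)⟩
      rw [hO2] at hz
      have h5 : 4 * s < Metric.infDist z K := hz.1
      linarith [hAAK z hzA]
    · obtain ⟨y', hy1, hy2, hy3⟩ := hto y hy
      obtain ⟨z', hz1, hz2, hz3⟩ := hto z hz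
      exact (hy3.trans (hgrid y' z' hy1 hz1 hy2 hz2)).trans hz3.symm
  have cov0 : ∀ j, j < M → ¬ T1 j → ¬ T2 j → Cov (B j) (κ j) (d j) (d (j + 1)) := by
    intro j hj h1 h2
    refine cov_compact (D := B j) (D' := B j) Metric.isOpen_ball subset_rfl subset_rfl
      (fun y hy z hz => JoinedIn.of_segment_subset ((convex_ball _ _).segment_subset hy hz)) (hκc j)
      ((hκO j).trans (hOB j)) (hdB j) (hdB1 j hj)
  let V : ℕ → Set (Fin N → ℂ) := fun j => if T1 j then A j else
    if T2 j then AAᶜ ∩ Metric.ball (c j) (10 * s) else B j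
  have hcov : ∀ j < M, Cov (V j) (κ j) (d j) (d (j + 1)) := by
    intro j hj
    by_cases h1 : T1 j
    · simp only [V, if_pos h1]; exact (hA j hj h1).2
    · by_cases h2 : T2 j
      · simp only [V, if_neg h1, if_pos h2]; exact cov2 j hj h2
      · simp only [V, if_neg h1, if_neg h2]; exact cov0 j hj h1 h2
  have hVb : ∀ j < M, V j ⊆ Metric.ball (c j) (10 * s) := by
    intro j hj
    by_cases h1 : T1 j
    · simp only [V, if_pos h1]
      exact ((hA j hj h1).1.trans inter_subset_right).trans (Metric.ball_subset_ball (by linarith))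
    · by_cases h2 : T2 j
      · simp only [V, if_neg h1, if_pos h2]; exact inter_subset_right
      · simp only [V, if_neg h1, if_neg h2]; exact Metric.ball_subset_ball (by linarith)
  have hnear : ∀ j < M, ∀ t : unitInterval, (j : ℝ) / M ≤ t → (t : ℝ) ≤ ((j : ℝ) + 1) / M →
      dist (γ t) (c j) < s := by
    intro j hj t h1 h2
    apply hpart
    rw [ptI_val M j hM hj.le, abs_of_nonneg (by linarith)]
    rw [hsucc] at h2
    linarith
  obtain ⟨γ', h0, hκγ, hVγ⟩ := loop_of_cov V κ d M hM hdM hcov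
  refine ⟨γ', h0, fun t => ?_, ?_, ?_⟩
  · obtain ⟨j, hj, h1, h2⟩ := exists_index M hM t
    have h3 : dist (γ' t) (c j) < 10 * s := hVb j hj (hVγ j hj t h1 h2)
    have h4 := hnear j hj t h1 h2
    linarith [dist_triangle_right (γ' t) (γ t) (c j)]
  · intro u t hu hta htb heq
    obtain ⟨j, hj, h1, h2⟩ := exists_index M hM u
    obtain ⟨k, hk, h3, h4⟩ := exists_index M hM t
    have hj1 : T1 j := h1.trans hu
    have hk2 : T2 k := ⟨by rw [← hsucc]; exact hta.trans h4, h3.trans htb⟩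
    have hk1 : ¬ T1 k := fun h => (hT12 k h).1 (Or.inl hk2)
    have h5 := hVγ j hj u h1 h2
    have h6 := hVγ k hk t h3 h4
    simp only [V, if_pos hj1] at h5
    simp only [V, if_neg hk1, if_pos hk2] at h6
    refine h6.1 ?_
    rw [← heq]
    exact mem_biUnion (show j ∈ {j | j < M ∧ T1 j} from ⟨hj, hj1⟩) h5
  · have h4 : volume ((Wᶜ ∪ (range γ ∩ {z | 0 < Metric.infDist z K ∧ Metric.infDist z K ≤ δ₁})) ∪
        ⋃ j ∈ Finset.range M, (O j \ κ j)) ≤ loss := by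
      refine (measure_union_le _ _).trans ((add_le_add (measure_union_le _ _) hκl).trans ?_)
      rw [hWn, zero_add]
      exact (add_le_add hδl le_rfl).trans (ENNReal.add_halves loss).le
    refine (measure_mono ?_).trans h4
    rintro y ⟨hyγ, hy⟩
    -- a point in some `O j` is fine
    have hfin : ∀ j < M, y ∈ O j → y ∈ ⋃ j ∈ Finset.range M, (O j \ κ j) := by
      intro j hj hyO
      exact mem_biUnion (show j ∈ ((Finset.range M : Finset ℕ) : Set ℕ) by simpa using hj)
        ⟨hyO, fun h => hy (hκγ j hj h)⟩
    by_cases hyW : y ∈ W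
    swap
    · exact Or.inl (Or.inl hyW)
    have hgood : ∀ j < M, ∀ t : unitInterval, (j : ℝ) / M ≤ t → (t : ℝ) ≤ ((j : ℝ) + 1) / M → γ t = y →
        ¬ T2 j → y ∈ O j := by
      intro j hj t h1 h2 hty hn2
      have hyB : y ∈ B j := by
        rw [← hty]
        change dist (γ t) (c j) < 3 * s
        linarith [hnear j hj t h1 h2]
      simp only [O, if_neg hn2]
      split_ifs
      · exact ⟨hyW, hyB⟩
      · exact hyB
    obtain ⟨t, hty⟩ := hyγ
    obtain ⟨j, hj, h1, h2⟩ := exists_index M hM t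
    by_cases hj2 : T2 j
    swap
    · exact Or.inr (hfin j hj (hgood j hj t h1 h2 hty hj2))
    by_cases hK0 : y ∈ K
    · obtain ⟨u, hu, huy⟩ := hK0
      obtain ⟨k, hk, h3, h5⟩ := exists_index M hM u
      refine Or.inr (hfin k hk (hgood k hk u h3 h5 huy ?_))
      intro h
      have h6 := h.1
      have h7 : (u : ℝ) ≤ m := hu
      linarith
    · have hpos : 0 < Metric.infDist y K := (hKc.isClosed.notMem_iff_infDist_pos hKne).mp hK0
      by_cases hle : Metric.infDist y K ≤ δ₁
      · exact Or.inl (Or.inr ⟨⟨t, hty⟩, hpos, hle⟩)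
      · push Not at hle
        refine Or.inr (hfin j hj ?_)
        have hn1 : ¬ T1 j := fun h => (hT12 j h).1 (Or.inl hj2)
        have hyB : y ∈ B j := by
          rw [← hty]
          change dist (γ t) (c j) < 3 * s
          linarith [hnear j hj t h1 h2]
        simp only [O, if_neg hn1, if_pos hj2]
        refine ⟨?_, hyB⟩
        change 4 * s < Metric.infDist y K
        linarith

theorem step_dense {N : ℕ} (hN : 0 < N) {U : Set C(unitInterval, Fin N → ℂ)} (hU : Steppable U)
    (γ : C(unitInterval, Fin N → ℂ)) (hγ : γ 0 = γ 1) {δ : ℝ} (hδ : 0 < δ) :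
    ∃ γ' : C(unitInterval, Fin N → ℂ), γ' 0 = γ' 1 ∧ dist γ' γ < δ ∧ γ' ∈ U ∧
      volume (range γ) ≤ volume (range γ') := by
  obtain ⟨γ₁, h0, h1, h2⟩ := gain hN γ hγ (δ := δ / 4) (by linarith)
  obtain ⟨γ₂, k0, k1, k2, k3⟩ := hU γ₁ h0 (δ / 4) (by linarith) _ (tsub_pos_of_lt h2).ne'
  refine ⟨γ₂, k0, ?_, k2, ?_⟩
  · refine lt_of_le_of_lt ((ContinuousMap.dist_le (by linarith : 0 ≤ δ / 2)).mpr fun t => ?_)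
      (half_lt_self hδ)
    linarith [dist_triangle (γ₂ t) (γ₁ t) (γ t), h1 t, k1 t]
  · have hf : volume (range γ₁) ≠ ⊤ := (isCompact_range γ₁.continuous).measure_lt_top.ne
    have h3 : volume (range γ₁) ≤ volume (range γ₁ \ range γ₂) + volume (range γ₂) :=
      (measure_mono (by rw [sdiff_union_self]; exact subset_union_left)).trans (measure_union_le _ _)
    have h4 := h3.trans (add_le_add k3 le_rfl)
    have h5 : volume (range γ₁) = (volume (range γ₁) - volume (range γ)) + volume (range γ) :=
      (tsub_add_cancel_of_le h2.le).symm
    have h6 : volume (range γ₁) - volume (range γ) ≠ ⊤ := ENNReal.sub_ne_top hf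
    rw [← ENNReal.add_le_add_iff_left h6, ← h5]
    exact h4

theorem closed_big {N : ℕ} (c : ENNReal) :
    IsClosed {γ : C(unitInterval, Fin N → ℂ) | γ 0 = γ 1 ∧ c ≤ volume (range γ)} := by
  have h1 : IsClosed {γ : C(unitInterval, Fin N → ℂ) | γ 0 = γ 1} :=
    isClosed_eq (by fun_prop) (by fun_prop)
  suffices h2 : IsClosed {γ : C(unitInterval, Fin N → ℂ) | c ≤ volume (range γ)} from h1.inter h2
  rw [← isOpen_compl_iff, isOpen_iff_mem_nhds]
  intro γ hγ
  have hγ' : volume (range γ) < c := not_le.mp hγ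
  obtain ⟨U, hU, hUo, hUc⟩ := Set.exists_isOpen_lt_of_lt _ _ hγ'
  have ho : IsOpen {g : C(unitInterval, Fin N → ℂ) | MapsTo g univ U} :=
    ContinuousMap.isOpen_setOfPred_mapsTo isCompact_univ hUo
  refine Filter.mem_of_superset (ho.mem_nhds (fun t _ => hU (mem_range_self t))) ?_
  intro g hg
  have h1 : volume (range g) < c := by
    refine (measure_mono ?_).trans_lt hUc
    rintro _ ⟨t, rfl⟩
    exact hg (mem_univ t)
  exact not_le.mpr h1

theorem baire_loop {N : ℕ} (hN : 0 < N) {ι : Type*} [Countable ι]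
    (U : ι → Set C(unitInterval, Fin N → ℂ)) (hUo : ∀ n, IsOpen (U n)) (hU : ∀ n, Steppable (U n))
    (γ : C(unitInterval, Fin N → ℂ)) (hγ : γ 0 = γ 1) {δ : ℝ} (hδ : 0 < δ) :
    ∃ γ' : C(unitInterval, Fin N → ℂ), γ' 0 = γ' 1 ∧ dist γ' γ < δ ∧ (∀ n, γ' ∈ U n) ∧
      volume (range γ) ≤ volume (range γ') := by
  set X : Set C(unitInterval, Fin N → ℂ) := {g | g 0 = g 1 ∧ volume (range γ) ≤ volume (range g)} with hX
  have hXc : IsClosed X := closed_big _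
  have : CompleteSpace X := hXc.completeSpace_coe
  have hd : Dense (⋂ n, (Subtype.val ⁻¹' U n : Set X)) := by
    refine dense_iInter_of_isOpen (fun n => (hUo n).preimage continuous_subtype_val) fun n => ?_
    rw [Metric.dense_iff]
    rintro ⟨g, hg⟩ r hr
    obtain ⟨g', h0, h1, h2, h3⟩ := step_dense hN (hU n) g hg.1 hr
    exact ⟨⟨g', h0, hg.2.trans h3⟩, h1, h2⟩
  obtain ⟨g, hg, hgd⟩ := hd.exists_dist_lt ⟨γ, hγ, le_rfl⟩ hδ
  refine ⟨g, g.2.1, ?_, fun n => mem_iInter.mp hg n, g.2.2⟩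
  rw [dist_comm]; exact hgd

theorem open_zero {N : ℕ} (p : MvPolynomial (Fin N) ℂ) (e : ℝ) :
    IsOpen {γ : C(unitInterval, Fin N → ℂ) | ∃ c : ℂ, ‖c‖ < e ∧
      ∀ t, eval (γ t) (p + C c) ≠ 0} := by
  have h : ∀ c : ℂ, IsOpen {γ : C(unitInterval, Fin N → ℂ) |
      MapsTo γ univ {z | eval z (p + C c) ≠ 0}} := fun c =>
    ContinuousMap.isOpen_setOfPred_mapsTo isCompact_univ
      (isOpen_ne_fun (MvPolynomial.continuous_eval _) continuous_const)
  have : {γ : C(unitInterval, Fin N → ℂ) | ∃ c : ℂ, ‖c‖ < e ∧ ∀ t, eval (γ t) (p + C c) ≠ 0} =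
      ⋃ c ∈ {c : ℂ | ‖c‖ < e}, {γ : C(unitInterval, Fin N → ℂ) |
      MapsTo γ univ {z | eval z (p + C c) ≠ 0}} := by
    ext γ
    simp only [mem_iUnion, exists_prop]
    exact exists_congr fun c => and_congr Iff.rfl ⟨fun h t _ => h t, fun h t => h (mem_univ t)⟩
  rw [this]
  exact isOpen_biUnion fun c _ => h c

theorem open_T {N : ℕ} (i : Fin N) (ζ : ℂ) (g e : ℝ) :
    IsOpen {γ : C(unitInterval, Fin N → ℂ) |
      ∃ F : MvPolynomial (Fin N) ℂ, ∀ t, γ t ∈ OF F i ζ g e} := by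
  have h : ∀ F : MvPolynomial (Fin N) ℂ, IsOpen {γ : C(unitInterval, Fin N → ℂ) |
      MapsTo γ univ (OF F i ζ g e)} := fun F =>
    ContinuousMap.isOpen_setOfPred_mapsTo isCompact_univ (isOpen_OF _ _ _ _ _)
  have : {γ : C(unitInterval, Fin N → ℂ) |
      ∃ F : MvPolynomial (Fin N) ℂ, ∀ t, γ t ∈ OF F i ζ g e} =
      ⋃ F, {γ : C(unitInterval, Fin N → ℂ) | MapsTo γ univ (OF F i ζ g e)} := by
    ext γ
    simp only [mem_iUnion]
    exact exists_congr fun c => ⟨fun h t _ => h t, fun h t => h (mem_univ t)⟩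
  rw [this]
  exact isOpen_iUnion h

theorem open_inj {N : ℕ} (b a' b' : ℝ) :
    IsOpen {γ : C(unitInterval, Fin N → ℂ) | ∀ s t : unitInterval, (s : ℝ) ≤ b →
      a' ≤ t → (t : ℝ) ≤ b' → γ s ≠ γ t} := by
  let S : Set (unitInterval × unitInterval) := {q | (q.1 : ℝ) ≤ b ∧ a' ≤ q.2 ∧ (q.2 : ℝ) ≤ b'}
  have hS : IsCompact S := by
    refine IsClosed.isCompact ?_
    have c1 : Continuous fun q : unitInterval × unitInterval => (q.1 : ℝ) := by fun_prop
    have c2 : Continuous fun q : unitInterval × unitInterval => (q.2 : ℝ) := by fun_prop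
    exact (isClosed_le c1 continuous_const).inter
      ((isClosed_le continuous_const c2).inter (isClosed_le c2 continuous_const))
  let Φ : C(unitInterval, Fin N → ℂ) → C(unitInterval × unitInterval, Fin N → ℂ) := fun γ =>
    γ.comp ⟨Prod.fst, continuous_fst⟩ - γ.comp ⟨Prod.snd, continuous_snd⟩
  have hΦ : Continuous Φ := (ContinuousMap.continuous_precomp _).sub (ContinuousMap.continuous_precomp _)
  have ho := (ContinuousMap.isOpen_setOfPred_mapsTo (Y := Fin N → ℂ) hS
    (isOpen_compl_singleton (x := (0 : Fin N → ℂ)))).preimage hΦ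
  convert ho using 1
  refine Set.ext fun γ => ⟨fun h q hq => ?_, fun h s t h1 h2 h3 heq => ?_⟩
  · intro h0
    exact h q.1 q.2 hq.1 hq.2.1 hq.2.2 (sub_eq_zero.mp h0)
  · exact h (show (s, t) ∈ S from ⟨h1, h2, h3⟩) (sub_eq_zero.mpr heq)

theorem steppable_univ {N : ℕ} : Steppable (univ : Set C(unitInterval, Fin N → ℂ)) :=
  fun γ hγ δ hδ loss _ => ⟨γ, hγ, fun t => by simpa using hδ, mem_univ _, by simp⟩

/-- a countable family of polynomials, dense on a ball -/
theorem dense_polys {N : ℕ} (R : ℝ) : ∃ f : ℕ → MvPolynomial (Fin N) ℂ,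
    ∀ p : MvPolynomial (Fin N) ℂ, ∀ δ > 0, ∃ n, ∀ z : Fin N → ℂ, ‖z‖ ≤ R →
      ‖eval z p - eval z (f n)‖ < δ := by
  let B : Set (Fin N → ℂ) := Metric.closedBall 0 R
  have : CompactSpace B := isCompact_iff_compactSpace.mp (isCompact_closedBall _ _)
  let φ : MvPolynomial (Fin N) ℂ → C(B, ℂ) := fun p =>
    ⟨fun z => eval (z : Fin N → ℂ) p, (MvPolynomial.continuous_eval p).comp continuous_subtype_val⟩
  have : Nonempty (range φ) := ⟨⟨φ 0, 0, rfl⟩⟩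
  have hch : ∀ y : range φ, ∃ p, φ p = y := fun y => y.2
  choose g hg using hch
  refine ⟨fun n => g (TopologicalSpace.denseSeq (range φ) n), fun p δ hδ => ?_⟩
  obtain ⟨n, hn⟩ := (TopologicalSpace.denseRange_denseSeq (range φ)).exists_dist_lt ⟨φ p, p, rfl⟩ hδ
  refine ⟨n, fun z hz => ?_⟩
  have h1 : dist (φ p) (φ (g (TopologicalSpace.denseSeq (range φ) n))) < δ := by rw [hg]; exact hn
  have h2 := (ContinuousMap.dist_apply_le_dist (f := φ p)
    (g := φ (g (TopologicalSpace.denseSeq (range φ) n))) ⟨z, by simpa [B] using hz⟩).trans_lt h1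
  rw [dist_eq_norm] at h2
  exact h2

theorem good_loop {N : ℕ} (hN : 2 ≤ N) (R : ℝ) (γ : C(unitInterval, Fin N → ℂ)) (hγ : γ 0 = γ 1)
    {δ : ℝ} (hδ : 0 < δ) :
    ∃ γ' : C(unitInterval, Fin N → ℂ), γ' 0 = γ' 1 ∧ dist γ' γ < δ ∧
      volume (range γ) ≤ volume (range γ') ∧
      (∀ s t : unitInterval, s < t → (t : ℝ) < 1 → γ' s ≠ γ' t) ∧
      (∀ (i : Fin N) (ζ : ℂ), (ζ = 1 ∨ ζ = -Complex.I) → ∀ (g : ℚ) (n : ℕ),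
        ∃ F : MvPolynomial (Fin N) ℂ, ∀ t, γ' t ∈ OF F i ζ g (1 / ((n : ℝ) + 1))) ∧
      ∀ (p : MvPolynomial (Fin N) ℂ), ∀ e > 0, ∃ q : MvPolynomial (Fin N) ℂ,
        (∀ t, eval (γ' t) q ≠ 0) ∧ ∀ z, ‖z‖ ≤ R → ‖eval z p - eval z q‖ < e := by
  obtain ⟨f, hf⟩ := dense_polys (N := N) R
  have hex : ∀ i : Fin N, ∃ i' : Fin N, i ≠ i' := by
    intro i
    have : Nontrivial (Fin N) := Fin.nontrivial_iff_two_le.mpr hN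
    obtain ⟨j, hj⟩ := exists_ne i
    exact ⟨j, hj.symm⟩
  let ζf : Bool → ℂ := fun b => if b then 1 else -Complex.I
  have hζ : ∀ b, ‖ζf b‖ = 1 := by intro b; cases b <;> simp [ζf]
  let UI : ℚ × ℚ × ℚ → Set C(unitInterval, Fin N → ℂ) := fun q =>
    if 0 ≤ (q.1 : ℝ) ∧ (q.1 : ℝ) < q.2.1 ∧ (q.2.2 : ℝ) < 1 then
      {γ | ∀ s t : unitInterval, (s : ℝ) ≤ (q.1 : ℝ) → (q.2.1 : ℝ) ≤ t → (t : ℝ) ≤ (q.2.2 : ℝ) → γ s ≠ γ t}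
    else univ
  let UT : Fin N × Bool × ℚ × ℕ → Set C(unitInterval, Fin N → ℂ) := fun q =>
    {γ | ∃ F : MvPolynomial (Fin N) ℂ, ∀ t, γ t ∈ OF F q.1 (ζf q.2.1) q.2.2.1 (1 / ((q.2.2.2 : ℝ) + 1))}
  let UZ : ℕ × ℕ → Set C(unitInterval, Fin N → ℂ) := fun q =>
    {γ | ∃ c : ℂ, ‖c‖ < 1 / ((q.2 : ℝ) + 1) ∧ ∀ t, eval (γ t) (f q.1 + C c) ≠ 0}
  let U := Sum.elim UI (Sum.elim UT UZ)
  have hUo : ∀ n, IsOpen (U n) := by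
    rintro (q | q | q)
    · change IsOpen (UI q)
      simp only [UI]
      split_ifs
      · exact open_inj _ _ _
      · exact isOpen_univ
    · exact open_T _ _ _ _
    · exact open_zero _ _
  have hU : ∀ n, Steppable (U n) := by
    rintro (q | q | q)
    · change Steppable (UI q)
      simp only [UI]
      split_ifs with h
      · obtain ⟨i', hi'⟩ := hex ⟨0, by omega⟩
        exact step_inj hi' h.1 h.2.1 h.2.2
      · exact steppable_univ
    · obtain ⟨i', hi'⟩ := hex q.1
      exact step_T hi' (hζ _) _ (by positivity)
    · exact step_zero _ (by positivity)
  obtain ⟨γ', h0, h1, h2, h3⟩ := baire_loop (by omega) U hUo hU γ hγ hδ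
  refine ⟨γ', h0, h1, h3, ?_, ?_, ?_⟩
  · intro s t hst ht
    have hst' : (s : ℝ) < t := hst
    obtain ⟨a, ha1, ha2⟩ := exists_rat_btwn hst'
    obtain ⟨a', ha1', ha2'⟩ := exists_rat_btwn ha2
    obtain ⟨b', hb1, hb2⟩ := exists_rat_btwn ht
    have h := h2 (Sum.inl (a, a', b'))
    change γ' ∈ UI (a, a', b') at h
    simp only [UI] at h
    rw [if_pos ⟨s.2.1.trans ha1.le, ha1', hb2⟩] at h
    exact h s t ha1.le ha2'.le hb1.le
  · intro i ζ hζ g n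
    rcases hζ with rfl | rfl
    · exact h2 (Sum.inr (Sum.inl (i, true, g, n)))
    · exact h2 (Sum.inr (Sum.inl (i, false, g, n)))
  · intro p e he
    obtain ⟨n, hn⟩ := hf p (e / 2) (half_pos he)
    obtain ⟨k, hk⟩ := exists_nat_one_div_lt (half_pos he)
    obtain ⟨c, hc, hc'⟩ := h2 (Sum.inr (Sum.inr (n, k)))
    refine ⟨f n + C c, hc', fun z hz => ?_⟩
    have h4 := hn z hz
    have h5 : eval z p - eval z (f n + C c) = (eval z p - eval z (f n)) - c := by
      rw [map_add, eval_C]; ring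
    rw [h5]
    have hc2 : ‖c‖ < 1 / ((k : ℝ) + 1) := hc
    linarith [norm_sub_le (eval z p - eval z (f n)) c]

/-- truncation to `[0,1]` -/
def clampI (u : ℝ) : ℝ := max 0 (min u 1)

theorem sum_clampI (y : ℝ) (M : ℕ) :
    ∑ k ∈ Finset.range M, clampI (y - k) = max 0 (min y M) := by
  induction M with
  | zero => simp
  | succ M ih =>
    rw [Finset.sum_range_succ, ih]
    have hM : (0 : ℝ) ≤ M := Nat.cast_nonneg M
    push_cast
    unfold clampI
    rcases le_total y 0 with h | h
    · rw [min_eq_left (by linarith), min_eq_left (by linarith), min_eq_left (by linarith),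
        max_eq_left (by linarith), max_eq_left (by linarith)]; ring
    · rcases le_total y M with h2 | h2
      · rw [min_eq_left h2, min_eq_left (by linarith), min_eq_left (by linarith),
          max_eq_right h, max_eq_left (by linarith)]; ring
      · rcases le_total y (M + 1) with h3 | h3
        · rw [min_eq_right h2, min_eq_left (by linarith), min_eq_left (by linarith),
            max_eq_right hM, max_eq_right (by linarith), max_eq_right (by linarith)]; ring
        · rw [min_eq_right h2, min_eq_right (by linarith), min_eq_right (by linarith),
            max_eq_right hM, max_eq_right (by linarith), max_eq_right (by linarith)]

theorem re_approx {N : ℕ} {K : Set (Fin N → ℂ)} {R : ℝ} (hR : ∀ x ∈ K, ‖x‖ ≤ R) (i : Fin N) {ζ : ℂ}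
    (hζ : ‖ζ‖ = 1) (H : ∀ (g : ℚ) (n : ℕ), ∃ F : MvPolynomial (Fin N) ℂ,
      ∀ x ∈ K, x ∈ OF F i ζ g (1 / ((n : ℝ) + 1))) {e : ℝ} (he : 0 < e) :
    ∃ P : MvPolynomial (Fin N) ℂ, ∀ x ∈ K, ‖eval x P - ((ζ * x i).re : ℂ)‖ < e := by
  obtain ⟨n₀, hn₀⟩ := exists_nat_gt (8 / e)
  set n := n₀ + 1
  have hn : (0 : ℝ) < n := by positivity
  have hn1 : 8 / e < n := by
    have : (n₀ : ℝ) ≤ n := by simp [n]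
    linarith
  obtain ⟨m, hm⟩ := exists_nat_gt (n * R)
  obtain ⟨k₀, hk₀⟩ := exists_nat_gt ((m : ℝ) + 1 + n)
  set e' : ℝ := 1 / ((k₀ : ℝ) + 1) with he'
  have he'0 : 0 < e' := by positivity
  have hm0 : (0 : ℝ) ≤ m := Nat.cast_nonneg m
  have hme : m * e' < 1 := by
    rw [he', mul_one_div, div_lt_one (by positivity)]; linarith
  have hne : n * e' < 1 := by
    rw [he', mul_one_div, div_lt_one (by positivity)]; linarith
  choose F hF using H
  let gk : ℕ → ℚ := fun k => ((k : ℚ) - m) / n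
  refine ⟨C (-(m : ℂ) / n) + C (1 / (n : ℂ)) * ∑ k ∈ Finset.range (2 * m), F (gk k) k₀, fun x hx => ?_⟩
  set h := (ζ * x i).re with hh
  have hhR : |h| ≤ R := by
    have h1 := Complex.abs_re_le_norm (ζ * x i)
    rw [norm_mul, hζ, one_mul] at h1
    exact h1.trans ((norm_le_pi_norm x i).trans (hR x hx))
  set y := n * h + m with hy
  have hy0 : 0 ≤ y := by have := (abs_le.mp hhR).1; nlinarith
  have hy1 : y ≤ 2 * m := by have := (abs_le.mp hhR).2; nlinarith
  -- real approximations
  have hs : ∀ k : ℕ, ∃ s : ℝ, ‖eval x (F (gk k) k₀) - s‖ < e' ∧ clampI (y - 1 - k) ≤ s ∧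
      s ≤ clampI (y + 2 - k) := by
    intro k
    obtain ⟨h1, h2, s, hs, hs'⟩ := hF (gk k) k₀ x hx
    have hw : (wf i ζ ((gk k : ℚ) : ℝ) x).re = (y - k) / n := by
      rw [wf, Complex.sub_re, Complex.ofReal_re, ← hh, hy]
      simp only [gk]; push_cast; field_simp; ring
    rw [hw] at h1 h2
    rcases h1 with h1 | h1
    · rcases h2 with h2 | h2
      · refine ⟨s, hs', ?_, ?_⟩
        · rw [div_lt_iff₀ hn] at h2
          have : clampI (y - 1 - k) = 0 := by
            unfold clampI; rw [max_eq_left]; exact (min_le_left _ _).trans (by linarith)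
          rw [this]; exact hs.1
        · rw [lt_div_iff₀ hn] at h1
          have : clampI (y + 2 - k) = 1 := by
            unfold clampI; rw [min_eq_right (by linarith)]; simp
          rw [this]; exact hs.2
      · refine ⟨1, by rw [Complex.ofReal_one]; exact h2, ?_, ?_⟩
        · unfold clampI; exact max_le zero_le_one (min_le_right _ _)
        · rw [lt_div_iff₀ hn] at h1
          have : clampI (y + 2 - k) = 1 := by
            unfold clampI; rw [min_eq_right (by linarith)]; simp
          rw [this]
    · by_cases h3 : (y - k) / n < e'
      · refine ⟨0, by rw [Complex.ofReal_zero, sub_zero]; exact h1, ?_, le_max_left _ _⟩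
        rw [div_lt_iff₀ hn] at h3
        unfold clampI
        exact max_le le_rfl ((min_le_left _ _).trans (by linarith))
      · have h4 : ‖eval x (F (gk k) k₀) - 1‖ < e' := by
          rcases h2 with h2 | h2
          · exact absurd h2 h3
          · exact h2
        refine ⟨1, by simpa using h4, max_le zero_le_one (min_le_right _ _), ?_⟩
        push Not at h3
        rw [le_div_iff₀ hn] at h3
        have h5 : 0 < e' * n := by positivity
        have : clampI (y + 2 - k) = 1 := by
          unfold clampI; rw [min_eq_right (by linarith)]; simp
        rw [this]
  choose s hs1 hs2 hs3 using hs
  have hsum1 : ‖∑ k ∈ Finset.range (2 * m), (eval x (F (gk k) k₀) - s k)‖ ≤ 2 * m * e' := by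
    refine (norm_sum_le _ _).trans ((Finset.sum_le_sum fun k _ => (hs1 k).le).trans ?_)
    simp
  have hlow := Finset.sum_le_sum (fun k (_ : k ∈ Finset.range (2 * m)) => hs2 k)
  have hupp := Finset.sum_le_sum (fun k (_ : k ∈ Finset.range (2 * m)) => hs3 k)
  rw [sum_clampI] at hlow hupp
  push_cast at hlow hupp
  set S := ∑ k ∈ Finset.range (2 * m), s k with hS
  have hS1 : |S - y| ≤ 2 := by
    rw [abs_le]; constructor
    · have : y - 1 ≤ max 0 (min (y - 1) (2 * m)) := by
        rw [min_eq_left (by linarith)]; exact le_max_right _ _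
      linarith
    · have : max 0 (min (y + 2) (2 * (m : ℝ))) ≤ y + 2 :=
        max_le (by linarith) (min_le_left _ _)
      linarith
  have hnC : (n : ℂ) ≠ 0 := by exact_mod_cast hn.ne'
  have hfin : eval x (C (-(m : ℂ) / n) + C (1 / (n : ℂ)) * ∑ k ∈ Finset.range (2 * m), F (gk k) k₀) - (h : ℂ)
      = (1 / (n : ℂ)) * (∑ k ∈ Finset.range (2 * m), (eval x (F (gk k) k₀) - s k) + ((S - y : ℝ) : ℂ)) := by
    rw [map_add, map_mul, eval_C, eval_C, map_sum, Finset.sum_sub_distrib, hS, hy]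
    push_cast
    field_simp
    ring
  rw [hfin, norm_mul, norm_div, norm_one, Complex.norm_natCast]
  have h7 := norm_add_le (∑ k ∈ Finset.range (2 * m), (eval x (F (gk k) k₀) - s k)) ((S - y : ℝ) : ℂ)
  rw [Complex.norm_real, Real.norm_eq_abs] at h7
  rw [one_div_mul_eq_div, div_lt_iff₀ hn]
  rw [div_lt_iff₀ he] at hn1
  nlinarith

theorem polyEq_of_conj {N : ℕ} {K : Set (Fin N → ℂ)} (hK : IsCompact K)
    (H : ∀ i : Fin N, ∀ e > 0, ∃ P : MvPolynomial (Fin N) ℂ,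
      ∀ x ∈ K, ‖eval x P - (starRingEnd ℂ) (x i)‖ < e) : PolyEqContinuous K := by
  intro f hf δ hδ
  have : CompactSpace K := isCompact_iff_compactSpace.mp hK
  let co : Fin N → C(K, ℂ) := fun i => ⟨fun x => (x : Fin N → ℂ) i, (continuous_apply i).comp continuous_subtype_val⟩
  let φ : MvPolynomial (Fin N) ℂ →ₐ[ℂ] C(K, ℂ) := MvPolynomial.aeval co
  have hφ : ∀ p (x : K), φ p x = eval (x : Fin N → ℂ) p := by
    intro p x
    induction p using MvPolynomial.induction_on with
    | C a => simp [φ]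
    | add p q hp hq => simp [hp, hq]
    | mul_X p j hp => simp only [map_mul, ContinuousMap.mul_apply, hp, eval_X]; simp [φ, co]
  let P : Subalgebra ℂ C(K, ℂ) := φ.range.topologicalClosure
  have hdense : ∀ g : C(K, ℂ), g ∈ P ↔ ∀ e > 0, ∃ p, dist (φ p) g < e := by
    intro g
    change g ∈ closure (φ.range : Set C(K, ℂ)) ↔ _
    rw [Metric.mem_closure_iff]
    constructor
    · intro h e he
      obtain ⟨_, ⟨p, rfl⟩, hp⟩ := h e he
      exact ⟨p, by rw [dist_comm]; exact hp⟩
    · intro h e he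
      obtain ⟨p, hp⟩ := h e he
      exact ⟨φ p, ⟨p, rfl⟩, by rw [dist_comm]; exact hp⟩
  have hco : ∀ i, co i ∈ P := fun i => (hdense _).mpr fun e he => ⟨X i, by simpa [φ] using he⟩
  have hcos : ∀ i, star (co i) ∈ P := by
    intro i
    rw [hdense]
    intro e he
    obtain ⟨p, hp⟩ := H i (e / 2) (half_pos he)
    refine ⟨p, lt_of_le_of_lt ((ContinuousMap.dist_le (half_pos he).le).mpr fun x => ?_) (half_lt_self he)⟩
    rw [dist_eq_norm, hφ]
    exact (hp x x.2).le
  let A : StarSubalgebra ℂ C(K, ℂ) := StarAlgebra.adjoin ℂ (range co)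
  have hAP : (A : Set C(K, ℂ)) ⊆ P := by
    have : A.toSubalgebra ≤ P := by
      change (StarAlgebra.adjoin ℂ (range co)).toSubalgebra ≤ P
      rw [StarAlgebra.adjoin_toSubalgebra]
      refine Algebra.adjoin_le ?_
      rintro g (⟨i, rfl⟩ | hg)
      · exact hco i
      · obtain ⟨i, hi⟩ := hg
        have : g = star (co i) := by rw [hi, star_star]
        rw [this]; exact hcos i
    exact this
  have hsep : A.SeparatesPoints := by
    intro x y hxy
    have : ∃ i, (x : Fin N → ℂ) i ≠ (y : Fin N → ℂ) i := by
      by_contra h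
      push Not at h
      exact hxy (Subtype.ext (funext h))
    obtain ⟨i, hi⟩ := this
    exact ⟨co i, ⟨co i, StarAlgebra.subset_adjoin ℂ _ (mem_range_self i), rfl⟩, hi⟩
  have htop := ContinuousMap.starSubalgebra_topologicalClosure_eq_top_of_separatesPoints A hsep
  let g : C(K, ℂ) := ⟨K.domRestrict f, hf.domRestrict⟩
  have hg : g ∈ P := by
    have h1 : g ∈ A.topologicalClosure := by rw [htop]; trivial
    have h2 : g ∈ closure (A : Set C(K, ℂ)) := h1
    have hcl : IsClosed (P : Set C(K, ℂ)) := φ.range.isClosed_topologicalClosure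
    exact closure_minimal hAP hcl h2
  obtain ⟨p, hp⟩ := (hdense g).mp hg δ hδ
  refine ⟨p, fun x hx => ?_⟩
  have h3 := (ContinuousMap.dist_apply_le_dist (f := φ p) (g := g) ⟨x, hx⟩).trans_lt hp
  rw [hφ, dist_comm, dist_eq_norm] at h3
  exact h3

theorem polyConvex_of_polyEq {N : ℕ} {J : Set (Fin N → ℂ)} (hJ : IsCompact J)
    (H : PolyEqContinuous J) : IsPolynomiallyConvex J := by
  apply Subset.antisymm
  · intro z hz
    by_contra hzJ
    let Den : (Fin N → ℂ) → ℂ := fun x => ∑ k, (x k - z k) * (starRingEnd ℂ) (x k - z k)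
    have hD : ∀ x ∈ J, Den x ≠ 0 := by
      intro x hx h0
      have h1 : Den x = ((∑ k, ‖x k - z k‖ ^ 2 : ℝ) : ℂ) := by
        simp only [Den, Complex.mul_conj']; push_cast; rfl
      rw [h1] at h0
      have h2 : ∑ k, ‖x k - z k‖ ^ 2 = 0 := by exact_mod_cast h0
      rw [Finset.sum_eq_zero_iff_of_nonneg (fun _ _ => by positivity)] at h2
      apply hzJ
      have : x = z := by
        funext k
        have := h2 k (Finset.mem_univ k)
        simpa [sub_eq_zero] using this
      rwa [← this]
    have hcont : Continuous Den := by
      refine continuous_finsetSum _ fun k _ => ?_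
      exact (by fun_prop : Continuous fun x : Fin N → ℂ => x k - z k).mul
        (Complex.continuous_conj.comp (by fun_prop))
    obtain ⟨B, hB⟩ := hJ.exists_bound_of_continuousOn (f := fun x => x - z) (by fun_prop)
    set B' := max B 0 + 1
    have hB' : 0 < B' := by positivity
    have hBx : ∀ x ∈ J, ∀ i, ‖x i - z i‖ ≤ B' := by
      intro x hx i
      have h1 := norm_le_pi_norm (x - z) i
      have h2 := hB x hx
      have h3 := le_max_left B 0
      simp only [Pi.sub_apply] at h1
      linarith
    have hNp : (0 : ℝ) < N + 1 := by positivity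
    have hap : ∀ i : Fin N, ∃ p : MvPolynomial (Fin N) ℂ, ∀ x ∈ J,
        ‖(starRingEnd ℂ) (x i - z i) / Den x - eval x p‖ < 1 / (2 * (N + 1) * B') := by
      intro i
      refine H (fun x => (starRingEnd ℂ) (x i - z i) / Den x) ?_ _ (by positivity)
      exact ContinuousOn.div (Complex.continuous_conj.comp (by fun_prop)).continuousOn
        hcont.continuousOn hD
    choose P hP using hap
    have h1 := hz (1 - ∑ i, (X i - C (z i)) * P i)
    have h2 : eval z (1 - ∑ i, (X i - C (z i)) * P i) = 1 := by
      simp [map_sum]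
    rw [h2, norm_one] at h1
    have h3 : (⨆ x ∈ J, ‖eval x (1 - ∑ i, (X i - C (z i)) * P i)‖) ≤ 1 / 2 := by
      refine Real.iSup_le (fun x => Real.iSup_le (fun hx => ?_) (by norm_num)) (by norm_num)
      have h4 : eval x (1 - ∑ i, (X i - C (z i)) * P i) =
          ∑ i, (x i - z i) * ((starRingEnd ℂ) (x i - z i) / Den x - eval x (P i)) := by
        have h5 : ∑ i, (x i - z i) * ((starRingEnd ℂ) (x i - z i) / Den x) = 1 := by
          have : ∀ i, (x i - z i) * ((starRingEnd ℂ) (x i - z i) / Den x) =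
            ((x i - z i) * (starRingEnd ℂ) (x i - z i)) / Den x := fun i => by ring
          simp only [this]
          rw [← Finset.sum_div]
          exact div_self (hD x hx)
        simp only [mul_sub (α := ℂ), Finset.sum_sub_distrib, h5]
        simp [map_sum]
      rw [h4]
      refine (norm_sum_le _ _).trans ?_
      have h6 : ∀ i ∈ (Finset.univ : Finset (Fin N)),
          ‖(x i - z i) * ((starRingEnd ℂ) (x i - z i) / Den x - eval x (P i))‖ ≤ 1 / (2 * (N + 1)) := by
        intro i _
        rw [norm_mul]
        calc _ ≤ B' * (1 / (2 * (N + 1) * B')) :=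
              mul_le_mul (hBx x hx i) (hP i x hx).le (norm_nonneg _) hB'.le
          _ = 1 / (2 * (N + 1)) := by field_simp
      refine (Finset.sum_le_sum h6).trans ?_
      rw [Finset.sum_const, Finset.card_univ, Fintype.card_fin, nsmul_eq_mul, mul_one_div,
        div_le_iff₀ (by positivity)]
      linarith
    linarith
  · intro z hz p
    obtain ⟨B, hB⟩ := hJ.exists_bound_of_continuousOn (f := fun x => eval x p)
      (MvPolynomial.continuous_eval p).continuousOn
    have hbdd : BddAbove (range fun x => ⨆ (_ : x ∈ J), ‖eval x p‖) := by
      refine ⟨max B 0, ?_⟩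
      rintro _ ⟨x, rfl⟩
      exact Real.iSup_le (fun hx => (hB x hx).trans (le_max_left _ _)) (le_max_right _ _)
    have := le_ciSup hbdd z
    simp only [ciSup_pos hz] at this
    exact this

theorem scc_of_loop {E : Type*} [TopologicalSpace E] (β : C(unitInterval, E)) (h01 : β 0 = β 1)
    (hinj : ∀ s t : unitInterval, s < t → (t:ℝ) < 1 → β s ≠ β t) :
    IsSimpleClosedCurve (range β) := by
  let g : ℝ → E := fun x => β (projIcc 0 1 zero_le_one x)
  have hg : Continuous g := β.continuous.comp continuous_projIcc
  have hg01 : g 0 = g 1 := by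
    simp only [g, projIcc_left, projIcc_right]; exact h01
  have hginj : InjOn g (Ico 0 1) := by
    intro x hx y hy hxy
    have hX : ((projIcc 0 1 zero_le_one x : unitInterval) : ℝ) = x := by
      rw [projIcc_of_mem zero_le_one (Ico_subset_Icc_self hx)]
    have hY : ((projIcc 0 1 zero_le_one y : unitInterval) : ℝ) = y := by
      rw [projIcc_of_mem zero_le_one (Ico_subset_Icc_self hy)]
    rcases lt_trichotomy x y with h | h | h
    · exact absurd hxy (hinj _ _ (by rw [← Subtype.coe_lt_coe, hX, hY]; exact h)
        (by rw [hY]; exact hy.2))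
    · exact h
    · exact absurd hxy.symm (hinj _ _ (by rw [← Subtype.coe_lt_coe, hX, hY]; exact h)
        (by rw [hX]; exact hx.2))
  have : Fact ((0:ℝ) < 1) := ⟨zero_lt_one⟩
  let L : AddCircle (1:ℝ) → E := AddCircle.liftIco (1:ℝ) 0 g
  have hL : Continuous L := AddCircle.liftIco_zero_continuous hg01 hg.continuousOn
  have hrep : ∀ a : AddCircle (1:ℝ), ∃ x ∈ Ico (0:ℝ) 1, (x : AddCircle (1:ℝ)) = a := by
    intro a
    have h2 := ((AddCircle.equivIco (1:ℝ) 0) a).2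
    exact ⟨_, ⟨h2.1, h2.2.trans_eq (zero_add 1)⟩, (AddCircle.equivIco (1:ℝ) 0).symm_apply_apply a⟩
  have hLx : ∀ x ∈ Ico (0:ℝ) 1, L (x : AddCircle (1:ℝ)) = g x := fun x hx =>
    AddCircle.liftIco_zero_coe_apply hx
  have hLi : Function.Injective L := by
    intro a b hab
    obtain ⟨x, hx, rfl⟩ := hrep a
    obtain ⟨y, hy, rfl⟩ := hrep b
    rw [hLx x hx, hLx y hy] at hab
    rw [hginj hx hy hab]
  let e := AddCircle.homeomorphCircle (T := (1:ℝ)) one_ne_zero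
  refine ⟨L ∘ e.symm, hL.comp e.symm.continuous, hLi.comp e.symm.injective, ?_⟩
  rw [e.symm.surjective.range_comp]
  apply Subset.antisymm
  · rintro _ ⟨a, rfl⟩
    obtain ⟨x, hx, rfl⟩ := hrep a
    rw [hLx x hx]; exact ⟨_, rfl⟩
  · rintro _ ⟨t, rfl⟩
    have hgt : g t = β t := by simp [g]
    rcases t.2.2.lt_or_eq with h | h
    · exact ⟨((t:ℝ) : AddCircle (1:ℝ)), by rw [hLx _ ⟨t.2.1, h⟩, hgt]⟩
    · have : t = 1 := Subtype.ext h
      refine ⟨((0:ℝ) : AddCircle (1:ℝ)), ?_⟩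
      rw [hLx _ ⟨le_rfl, zero_lt_one⟩, ← hgt, h, hg01]

/-- translation of polynomials -/
def trP {N : ℕ} (v : Fin N → ℂ) (p : MvPolynomial (Fin N) ℂ) : MvPolynomial (Fin N) ℂ :=
  aeval (fun i => (X i + C (v i) : MvPolynomial (Fin N) ℂ)) p

theorem eval_trP {N : ℕ} (v z : Fin N → ℂ) (p : MvPolynomial (Fin N) ℂ) :
    eval z (trP v p) = eval (z + v) p := by
  induction p using MvPolynomial.induction_on with
  | C a => simp [trP]
  | add p q hp hq => unfold trP at *; rw [map_add, map_add, map_add, hp, hq]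
  | mul_X p j hp => unfold trP at *; rw [map_mul, map_mul, map_mul, hp]; simp

theorem polyEq_trans {N : ℕ} {K : Set (Fin N → ℂ)} (v : Fin N → ℂ) (H : PolyEqContinuous K) :
    PolyEqContinuous ((fun x => x + v) '' K) := by
  intro f hf δ hδ
  obtain ⟨p, hp⟩ := H (fun x => f (x + v))
    (hf.comp (by fun_prop) (fun x hx => ⟨x, hx, rfl⟩)) δ hδ
  refine ⟨trP (-v) p, ?_⟩
  rintro _ ⟨x, hx, rfl⟩
  rw [eval_trP]
  simpa using hp x hx

theorem polyEq_of_OF {N : ℕ} {K : Set (Fin N → ℂ)} (hK : IsCompact K)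
    (H : ∀ (i : Fin N) (ζ : ℂ), (ζ = 1 ∨ ζ = -Complex.I) → ∀ (g : ℚ) (n : ℕ), ∃ F, ∀ x ∈ K,
      x ∈ OF F i ζ g (1 / ((n:ℝ)+1))) : PolyEqContinuous K := by
  obtain ⟨R, hR⟩ := hK.isBounded.exists_norm_le
  refine polyEq_of_conj hK ?_
  intro i e he
  obtain ⟨P, hP⟩ := re_approx hR i (ζ := 1) (by simp) (H i 1 (Or.inl rfl)) (half_pos he)
  obtain ⟨Q, hQ⟩ := re_approx hR i (ζ := -Complex.I) (by simp) (H i _ (Or.inr rfl)) (half_pos he)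
  refine ⟨P - C Complex.I * Q, fun x hx => ?_⟩
  have h1 := hP x hx
  have h2 := hQ x hx
  have key : eval x (P - C Complex.I * Q) - (starRingEnd ℂ) (x i) =
      (eval x P - ((1 * x i).re : ℂ)) - Complex.I * (eval x Q - ((-Complex.I * x i).re : ℂ)) := by
    have : (starRingEnd ℂ) (x i) = ((1 * x i).re : ℂ) - Complex.I * ((-Complex.I * x i).re : ℂ) := by
      apply Complex.ext <;> simp
    rw [this]
    simp only [map_sub, map_mul, eval_C]
    ring
  rw [key]
  refine (norm_sub_le _ _).trans_lt ?_
  rw [norm_mul, Complex.norm_I, one_mul ‖_‖]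
  linarith

/-- Simple closed curve version (`N ≥ 2`) of the big-arc theorem. -/
theorem stmt_6 (N : ℕ) (hN : 2 ≤ N) (Ω : Set (Fin N → ℂ)) (hΩopen : IsOpen Ω)
    (hΩconn : IsConnected Ω) (hΩbdd : Bornology.IsBounded Ω)
    (x₀ : Fin N → ℂ) (hx₀ : x₀ ∈ Ω) (ε : ℝ) (hε : 0 < ε) :
    ∃ J : Set (Fin N → ℂ), IsSimpleClosedCurve J ∧ IsPolynomiallyConvex J ∧
      x₀ ∈ J ∧ J ⊆ Ω ∧
      volume (Ω \ J) < ENNReal.ofReal ε ∧ PolyEqContinuous J ∧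
      ∀ (p : MvPolynomial (Fin N) ℂ) (δ : ℝ), 0 < δ →
        ∃ q : MvPolynomial (Fin N) ℂ, (∀ z ∈ J, eval z q ≠ 0) ∧
          ∀ z ∈ closure Ω, ‖eval z p - eval z q‖ < δ := by
  have hfin : volume Ω ≠ ⊤ := hΩbdd.measure_lt_top.ne
  obtain ⟨κ, hκΩ, hκ, hκε⟩ := hΩopen.measurableSet.exists_isCompact_sdiff_lt (μ := volume) hfin
    (ε := ENNReal.ofReal ε) (by simpa using hε)
  have hpc : IsPathConnected Ω := hΩopen.isConnected_iff_isPathConnected.mp hΩconn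
  obtain ⟨γ₀, hγ₀Ω, hγ₀κ⟩ := cov_compact hΩopen subset_rfl subset_rfl
    (fun x hx y hy => hpc.joinedIn x hx y hy) hκ hκΩ hx₀ hx₀
  obtain ⟨η, hη, hηΩ⟩ := (isCompact_range γ₀.continuous).exists_thickening_subset_open hΩopen
    (by rintro _ ⟨t, rfl⟩; exact hγ₀Ω t)
  obtain ⟨R, hR⟩ := hΩbdd.closure.exists_norm_le
  obtain ⟨γ, hγ01, hγd, hγv, hγinj, hγOF, hγq⟩ := good_loop hN (R + η) γ₀.toContinuousMap
    (by simp) (half_pos hη)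
  have hd : ∀ t, dist (γ t) (γ₀ t) < η / 2 := fun t =>
    (ContinuousMap.dist_apply_le_dist t).trans_lt hγd
  set v : Fin N → ℂ := x₀ - γ 0 with hv
  have hvn : ‖v‖ < η / 2 := by
    have := hd 0
    rw [dist_comm, dist_eq_norm] at this
    simpa [hv] using this
  let β : C(unitInterval, Fin N → ℂ) := ⟨fun t => γ t + v, by fun_prop⟩
  have hJ : range β = (fun x => x + v) '' range γ := by
    rw [← range_comp]; rfl
  have hPE : PolyEqContinuous (range β) := by
    rw [hJ]
    refine polyEq_trans v (polyEq_of_OF (isCompact_range γ.continuous) ?_)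
    intro i ζ hζ g n
    obtain ⟨F, hF⟩ := hγOF i ζ hζ g n
    exact ⟨F, by rintro _ ⟨t, rfl⟩; exact hF t⟩
  have hJΩ : range β ⊆ Ω := by
    rintro _ ⟨t, rfl⟩
    apply hηΩ
    rw [Metric.mem_thickening_iff]
    refine ⟨γ₀ t, ⟨t, rfl⟩, ?_⟩
    calc dist (γ t + v) (γ₀ t) ≤ dist (γ t + v) (γ t) + dist (γ t) (γ₀ t) := dist_triangle _ _ _
      _ < η := by
        have h1 : dist (γ t + v) (γ t) = ‖v‖ := by simp [dist_eq_norm]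
        rw [h1]; linarith [hd t]
  have hJc : IsCompact (range β) := isCompact_range β.continuous
  have hvol : volume κ ≤ volume (range β) := by
    have h1 : volume (range β) = volume (range γ) := by
      rw [hJ, image_add_right, measure_preimage_add_right]
    rw [h1]
    exact (measure_mono hγ₀κ).trans hγv
  refine ⟨range β, scc_of_loop β ?_ ?_, polyConvex_of_polyEq hJc hPE, ⟨0, ?_⟩, hJΩ, ?_, hPE, ?_⟩
  · change γ 0 + v = γ 1 + v
    rw [hγ01]
  · intro s t hst ht h
    exact hγinj s t hst ht (add_right_cancel (show γ s + v = γ t + v from h))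
  · change γ 0 + v = x₀
    simp [hv]
  · refine lt_of_le_of_lt ?_ hκε
    rw [measure_sdiff hJΩ hJc.measurableSet.nullMeasurableSet hJc.measure_lt_top.ne,
      measure_sdiff hκΩ hκ.measurableSet.nullMeasurableSet hκ.measure_lt_top.ne]
    exact tsub_le_tsub_left hvol _
  · intro p δ hδ
    obtain ⟨q, hq1, hq2⟩ := hγq (trP v p) δ hδ
    refine ⟨trP (-v) q, ?_, ?_⟩
    · rintro _ ⟨t, rfl⟩
      rw [eval_trP]
      have : β t + -v = γ t := by change γ t + v + -v = γ t; simp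
      rw [this]; exact hq1 t
    · intro z hz
      have h := hq2 (z + -v) (by
        refine (norm_add_le _ _).trans ?_
        rw [norm_neg]; linarith [hR z hz])
      rw [eval_trP] at h ⊢
      simpa using h

end
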